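/- Assume the Riemann Hypothesis and let 0 < B₁ ≤ B₂ < B₃ < 1 and c > 0. Suppose there are constants D and X₀ such that |Ṽ(X, h) − h·X·(log(X/h) − γ₀ − log 2π)| ≤ D·h·X^{1−c} for all X ≥ X₀ and all h with X^{1−B₃} ≤ h ≤ X^{1−B₁}. Then for every ε > 0 there exist constants C > 0 and X₁ such that for all X ≥ X₁ and all δ with X^{−B₂} ≤ δ ≤ X^{−B₁}: |V(X, δ) − (1/2)·δ·X²·(log(1/δ) + 1 − γ₀ − log 2π)| ≤ C·(δ^{1−ε}·X^{2−c/3} + δ^{1−ε}·X²·(δ·X^{B₃})^{−2/(3B₃)}). -/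

import Mathlib

open Real MeasureTheory

/-- The Chebyshev function `ψ(x) = ∑_{n ≤ x} Λ(n)`. -/
noncomputable def chebyshevPsi (x : ℝ) : ℝ :=
  ∑ n ∈ Finset.range (⌊x⌋₊ + 1), ArithmeticFunction.vonMangoldt n

/-- The variance `V(X,δ) = ∫_1^X (ψ(x+δx) - ψ(x) - δx)² dx`. -/
noncomputable def zetaVarDelta (X δ : ℝ) : ℝ :=
  ∫ x in (1:ℝ)..X, (chebyshevPsi (x + δ * x) - chebyshevPsi x - δ * x) ^ 2

/-- The variance `Ṽ(X,h) = ∫_1^X (ψ(x+h) - ψ(x) - h)² dx`. -/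
noncomputable def zetaVarH (X h : ℝ) : ℝ :=
  ∫ x in (1:ℝ)..X, (chebyshevPsi (x + h) - chebyshevPsi x - h) ^ 2

namespace D1
open Complex Set Filter Topology

/-- Fractional part supported on `(1, ∞)`. -/
noncomputable def frc (t : ℝ) : ℂ := (Ioi (1:ℝ)).indicator (fun t => ((Int.fract t : ℝ) : ℂ)) t

lemma frc_norm_le (t : ℝ) : ‖frc t‖ ≤ 1 := by
  unfold frc
  by_cases h : t ∈ Ioi (1:ℝ)
  · rw [indicator_of_mem h, Complex.norm_real, Real.norm_eq_abs, abs_of_nonneg (Int.fract_nonneg _)]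
    exact (Int.fract_lt_one _).le
  · rw [indicator_of_notMem h]; simp

lemma frc_meas : Measurable frc := by
  unfold frc
  exact (Complex.measurable_ofReal.comp measurable_fract).indicator measurableSet_Ioi

lemma frc_locInt : LocallyIntegrableOn frc (Ioi 0) := by
  apply LocallyIntegrable.locallyIntegrableOn
  apply LocallyIntegrable.mono (f := fun _ => (1:ℝ)) (g := frc) (locallyIntegrable_const _)
    frc_meas.aestronglyMeasurable
  filter_upwards with t
  simpa using frc_norm_le t

lemma frc_mellin_diff {s : ℂ} (hs : s.re < 0) : DifferentiableAt ℂ (mellin frc) s := by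
  apply mellin_differentiableAt_of_isBigO_rpow (a := 0) (b := s.re - 1) frc_locInt _ hs _ (by linarith)
  · apply Asymptotics.IsBigO.of_bound 1
    filter_upwards with t
    simpa using frc_norm_le t
  · apply Asymptotics.IsBigO.of_bound 1
    have : ∀ᶠ t : ℝ in 𝓝[>] 0, t < 1 :=
      eventually_nhdsWithin_of_eventually_nhds (eventually_lt_nhds one_pos)
    filter_upwards [this] with t ht
    have : frc t = 0 := by
      unfold frc; rw [indicator_of_notMem]; simpa using ht.le
    rw [this]; simp

lemma frc_mellin_eq (s : ℂ) : mellin frc (-s) = ∫ t in Ioi (1:ℝ), ((Int.fract t : ℝ) : ℂ) * (t:ℂ) ^ (-(s+1)) := by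
  unfold mellin frc
  have : ∀ t : ℝ, (t:ℂ) ^ (-s-1) • (Ioi (1:ℝ)).indicator (fun t => ((Int.fract t : ℝ) : ℂ)) t
    = (Ioi (1:ℝ)).indicator (fun t:ℝ => ((Int.fract t : ℝ) : ℂ) * (t:ℂ) ^ (-(s+1))) t := by
    intro t
    by_cases h : t ∈ Ioi (1:ℝ)
    · rw [indicator_of_mem h, indicator_of_mem h, smul_eq_mul, mul_comm]
      congr 2; ring
    · rw [indicator_of_notMem h, indicator_of_notMem h]; simp
  simp_rw [this]
  rw [setIntegral_indicator measurableSet_Ioi]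
  congr 2
  ext t; simp
  try (intro h; linarith)

lemma frc_intOn {s : ℂ} (hs : 0 < s.re) :
    IntegrableOn (fun t : ℝ => ((Int.fract t : ℝ) : ℂ) * (t:ℂ) ^ (-(s+1))) (Ioi 1) := by
  have h2 : IntegrableOn (fun t : ℝ => t ^ (-(s.re+1))) (Ioi 1) :=
    integrableOn_Ioi_rpow_of_lt (by linarith) one_pos
  refine Integrable.mono' h2 ?_ ?_
  · apply AEStronglyMeasurable.mul
    · exact (Complex.measurable_ofReal.comp measurable_fract).aestronglyMeasurable
    · apply ContinuousOn.aestronglyMeasurable _ measurableSet_Ioi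
      intro t ht
      have : (0:ℝ) < t := lt_trans one_pos ht
      apply ContinuousAt.continuousWithinAt
      exact continuousAt_ofReal_cpow_const _ _ (Or.inr this.ne')
  · filter_upwards [ae_restrict_mem measurableSet_Ioi] with t ht
    have h0 : (0:ℝ) < t := lt_trans one_pos ht
    rw [norm_mul, Complex.norm_cpow_eq_rpow_re_of_pos h0, Complex.norm_real, Real.norm_eq_abs,
      abs_of_nonneg (Int.fract_nonneg _)]
    simp only [neg_re, add_re, one_re]
    have := (Int.fract_lt_one t).le
    have h3 : 0 ≤ t ^ (-(s.re+1)) := by positivity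
    nlinarith

lemma frc_mellin_bound {s : ℂ} (hs : 0 < s.re) : ‖mellin frc (-s)‖ ≤ 1 / s.re := by
  rw [frc_mellin_eq]
  have h2 : IntegrableOn (fun t : ℝ => t ^ (-(s.re+1))) (Ioi 1) :=
    integrableOn_Ioi_rpow_of_lt (by linarith) one_pos
  calc _ ≤ ∫ t in Ioi (1:ℝ), t ^ (-(s.re+1)) := by
        apply norm_integral_le_of_norm_le h2
        filter_upwards [ae_restrict_mem measurableSet_Ioi] with t ht
        have h0 : (0:ℝ) < t := lt_trans one_pos ht
        rw [norm_mul, Complex.norm_cpow_eq_rpow_re_of_pos h0, Complex.norm_real, Real.norm_eq_abs,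
          abs_of_nonneg (Int.fract_nonneg _)]
        simp only [neg_re, add_re, one_re]
        have := (Int.fract_lt_one t).le
        have h3 : 0 ≤ t ^ (-(s.re+1)) := by positivity
        nlinarith
    _ = 1 / s.re := by
        rw [integral_Ioi_rpow_of_lt (by linarith) one_pos]
        simp
        

lemma zeta1_eq_of_gt {s : ℂ} (hs : 1 < s.re) :
    riemannZeta₁ s = s - s * (s - 1) * mellin frc (-s) := by
  have hs1 : s ≠ 1 := by rintro rfl; simp at hs
  have hs1' : s - 1 ≠ 0 := sub_ne_zero.mpr hs1
  have hz : riemannZeta s = s * ∫ t in Ioi (1:ℝ), ((⌊t⌋₊ : ℂ)) * (t:ℂ) ^ (-(s+1)) := by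
    rw [← LSeries_one_eq_riemannZeta hs, LSeries_eq_mul_integral (f := 1) (r := 1) zero_le_one hs]
    · simp
    · exact LSeriesSummable_one_iff.mpr hs
    · simp
      exact Asymptotics.IsBigO.of_bound 1 (by filter_upwards with n; simp)
  have hI : IntegrableOn (fun t : ℝ => (t:ℂ) ^ (-s)) (Ioi 1) :=
    integrableOn_Ioi_cpow_of_lt (by simpa using hs) one_pos
  have h3 : ∫ t in Ioi (1:ℝ), ((⌊t⌋₊ : ℂ)) * (t:ℂ) ^ (-(s+1)) = 1/(s-1) - mellin frc (-s) := by
    rw [frc_mellin_eq]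
    have : ∫ t in Ioi (1:ℝ), (t:ℂ) ^ (-s) = 1 / (s-1) := by
      rw [integral_Ioi_cpow_of_lt (by simpa using hs) one_pos]
      simp
      rw [show -s+1 = -(s-1) by ring, neg_div_neg_eq, one_div]
    rw [← this, ← integral_sub hI (frc_intOn (by linarith))]
    apply setIntegral_congr_fun measurableSet_Ioi
    intro t ht
    have h0 : (0:ℝ) < t := lt_trans one_pos ht
    have h0' : (t:ℂ) ≠ 0 := by exact_mod_cast h0.ne'
    simp only
    have e1 : (t:ℂ) ^ (-s) = t * (t:ℂ) ^ (-(s+1)) := by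
      rw [show -s = 1 + -(s+1) by ring, cpow_add _ _ h0', cpow_one]
    have e2 : (⌊t⌋₊ : ℂ) = t - ((Int.fract t : ℝ):ℂ) := by
      have := natCast_floor_eq_intCast_floor (R := ℝ) h0.le
      have h4 : (⌊t⌋₊ : ℝ) = t - Int.fract t := by rw [this, Int.self_sub_fract]
      exact_mod_cast h4
    rw [e1, e2]; ring
  have h5 := riemannZeta_eq_inv_sub_mul hs1
  have h6 : riemannZeta₁ s = (s-1) * riemannZeta s := by rw [h5]; field_simp
  rw [h6, hz, h3]; field_simp

lemma zeta1_eq {s : ℂ} (hs : 0 < s.re) :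
    riemannZeta₁ s = s - s * (s - 1) * mellin frc (-s) := by
  have hop : IsOpen {s : ℂ | 0 < s.re} := isOpen_lt continuous_const Complex.continuous_re
  have h1 : AnalyticOnNhd ℂ riemannZeta₁ {s : ℂ | 0 < s.re} :=
    differentiable_riemannZeta₁.differentiableOn.analyticOnNhd hop
  have h2 : AnalyticOnNhd ℂ (fun s => s - s * (s - 1) * mellin frc (-s)) {s : ℂ | 0 < s.re} := by
    apply DifferentiableOn.analyticOnNhd _ hop
    intro z hz
    apply DifferentiableAt.differentiableWithinAt
    have : DifferentiableAt ℂ (fun s => mellin frc (-s)) z := by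
      apply DifferentiableAt.comp (g := mellin frc) z (frc_mellin_diff (by simpa using hz))
      fun_prop
    fun_prop
  have h3 : IsPreconnected {s : ℂ | 0 < s.re} := (convex_halfSpace_re_gt 0).isPreconnected
  refine h1.eqOn_of_preconnected_of_eventuallyEq h2 h3 (z₀ := 2) (by simp) ?_ hs
  have : {s : ℂ | 1 < s.re} ∈ 𝓝 (2:ℂ) :=
    (isOpen_lt continuous_const Complex.continuous_re).mem_nhds (by simp)
  filter_upwards [this] with z hz using zeta1_eq_of_gt hz

lemma zeta1_bound {s : ℂ} (hs : 1/2 ≤ s.re) : ‖riemannZeta₁ s‖ ≤ 3 * (1 + ‖s‖) ^ 2 := by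
  rw [zeta1_eq (by linarith)]
  have h1 := frc_mellin_bound (s := s) (by linarith)
  have h2 : 1 / s.re ≤ 2 := by rw [div_le_iff₀ (by linarith)]; linarith
  have h3 : ‖mellin frc (-s)‖ ≤ 2 := h1.trans h2
  calc _ ≤ ‖s‖ + ‖s‖ * ‖s - 1‖ * ‖mellin frc (-s)‖ := by
        refine (norm_sub_le _ _).trans ?_
        rw [norm_mul, norm_mul]
    _ ≤ ‖s‖ + ‖s‖ * (‖s‖ + 1) * 2 := by
        gcongr
        refine (norm_sub_le _ _).trans (by simp)
    _ ≤ _ := by nlinarith [norm_nonneg s]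

lemma zeta1_ne_zero (hRH : RiemannHypothesis) {s : ℂ} (hs : 1/2 < s.re) : riemannZeta₁ s ≠ 0 := by
  by_cases h1 : s = 1
  · rw [h1]; simp
  · intro h
    have h2 := riemannZeta_eq_inv_sub_mul h1
    rw [h, mul_zero] at h2
    have := hRH s h2 (by
      rintro ⟨n, hn⟩
      rw [hn] at hs
      simp at hs
      have : (0:ℝ) ≤ n := Nat.cast_nonneg n
      linarith) h1
    linarith

lemma zeta1_two_lower : ∃ c : ℝ, 0 < c ∧ ∀ t : ℝ, c ≤ ‖riemannZeta₁ (2 + t * I)‖ := by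
  have hz2 : π ^ 2 / 6 < 1.7 := by
    have := Real.pi_lt_d2
    have := Real.pi_pos
    nlinarith
  refine ⟨0.3, by norm_num, fun t => ?_⟩
  set s : ℂ := 2 + t * I with hsdef
  have hre : s.re = 2 := by simp [hsdef]
  have hs1 : s ≠ 1 := by intro h; rw [h] at hre; norm_num at hre
  have h6 : riemannZeta₁ s = (s-1) * riemannZeta s := by
    rw [riemannZeta_eq_inv_sub_mul hs1, mul_inv_cancel_left₀ (sub_ne_zero.mpr hs1)]
  have h7 : 1 ≤ ‖s - 1‖ := by
    have := Complex.abs_re_le_norm (s - 1)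
    simp [hre] at this
    norm_num at this
    exact this
  have h8 : 0.3 ≤ ‖riemannZeta s‖ := by
    have hS : Summable (fun n : ℕ => 1 / ((n:ℂ) + 1) ^ s) := by
      have := (Complex.summable_one_div_nat_cpow (p := s)).mpr (by rw [hre]; norm_num)
      exact_mod_cast (summable_nat_add_iff 1).mpr this
    have hn : ∀ n : ℕ, ‖1 / ((n:ℂ) + 1) ^ s‖ = 1 / ((n:ℝ) + 1) ^ 2 := by
      intro n
      have : ((n:ℂ) + 1) = (((n:ℝ) + 1 : ℝ) : ℂ) := by push_cast; rfl
      rw [norm_div, this, Complex.norm_cpow_eq_rpow_re_of_pos (by positivity), hre]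
      simp
    rw [zeta_eq_tsum_one_div_nat_add_one_cpow (by rw [hre]; norm_num), hS.tsum_eq_zero_add]
    have hS2 : HasSum (fun n : ℕ => 1 / ((n:ℝ) + 1) ^ 2) (π ^ 2 / 6) := by
      have := (hasSum_nat_add_iff' 1).mpr hasSum_zeta_two
      simpa using this
    have hS3 : HasSum (fun n : ℕ => 1 / (((n + 1 : ℕ):ℝ) + 1) ^ 2) (π ^ 2 / 6 - 1) := by
      have := (hasSum_nat_add_iff' 1).mpr hS2
      simpa using this
    have h9 : ‖∑' n : ℕ, 1 / (((n + 1 : ℕ):ℂ) + 1) ^ s‖ ≤ π ^ 2 / 6 - 1 := by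
      apply tsum_of_norm_bounded hS3
      intro n
      rw [hn (n+1)]
    have h10 : (1:ℂ) / (((0:ℕ):ℂ) + 1) ^ s = 1 := by simp
    rw [h10]
    have := norm_sub_norm_le (1:ℂ) (-(∑' n : ℕ, 1 / (((n + 1 : ℕ):ℂ) + 1) ^ s))
    rw [sub_neg_eq_add, norm_neg, norm_one] at this
    linarith
  rw [h6, norm_mul]
  nlinarith
end D1

namespace D1
open Complex Set Filter Topology Metric

lemma logDeriv_bound (hRH : RiemannHypothesis) {ε : ℝ} (hε : 0 < ε) (hε1 : ε ≤ 1/2) :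
    ∃ C : ℝ, 0 < C ∧ ∀ s : ℂ, 1/2 + ε ≤ s.re → s.re ≤ 2 →
      ‖deriv riemannZeta₁ s / riemannZeta₁ s‖ ≤ C * Real.log (5 + |s.im|) := by
  obtain ⟨c, hc, hlow⟩ := zeta1_two_lower
  set A : ℝ := 3 / c + 1 with hA
  have hA1 : 1 < A := by rw [hA]; have : 0 < 3 / c := by positivity
                         linarith
  refine ⟨12 / ε ^ 2 * (Real.log A + 2), by have := Real.log_pos hA1; positivity, fun s hs1 hs2 => ?_⟩
  set t := s.im with ht
  set z0 : ℂ := 2 + t * I with hz0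
  set M : ℝ := Real.log (A * (5 + |t|) ^ 2) with hM
  have h5 : 1 ≤ Real.log (5 + |t|) := by
    rw [Real.le_log_iff_exp_le (by positivity)]
    have := Real.exp_one_lt_d9
    have := abs_nonneg t
    linarith
  have hlogA := Real.log_pos hA1
  have hMeq : M = Real.log A + 2 * Real.log (5 + |t|) := by
    rw [hM, Real.log_mul (by positivity) (by positivity), Real.log_pow]; push_cast; ring
  have hMpos : 0 < M := by rw [hMeq]; linarith
  have hre0 : z0.re = 2 := by simp [hz0]
  have him0 : z0.im = t := by simp [hz0]
  have hball : ∀ z ∈ ball (0:ℂ) (3/2), 1/2 < (z0 + z).re := by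
    intro z hz
    have h1 : ‖z‖ < 3/2 := by simpa using hz
    have h2 := Complex.abs_re_le_norm z
    rw [add_re, hre0]
    have := neg_abs_le z.re
    linarith
  have hne : ∀ z ∈ ball (0:ℂ) (3/2), riemannZeta₁ (z0 + z) ≠ 0 :=
    fun z hz => zeta1_ne_zero hRH (hball z hz)
  have hdZ : Differentiable ℂ (fun z => riemannZeta₁ (z0 + z)) :=
    differentiable_riemannZeta₁.comp (by fun_prop)
  have hdZ' : Differentiable ℂ (fun z => deriv riemannZeta₁ (z0 + z)) := by
    have : Differentiable ℂ (deriv riemannZeta₁) := differentiable_riemannZeta₁.deriv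
    exact this.comp (by fun_prop)
  have hdq : DifferentiableOn ℂ (fun z => deriv riemannZeta₁ (z0 + z) / riemannZeta₁ (z0 + z)) (ball 0 (3/2)) :=
    hdZ'.differentiableOn.div hdZ.differentiableOn hne
  obtain ⟨g, hg0, hg⟩ := hdq.isExactOn_ball.with_val_at 0 0
  -- Z1(z0+z) = Z1 z0 * exp (g z)
  have hexp : ∀ z ∈ ball (0:ℂ) (3/2), riemannZeta₁ (z0 + z) = riemannZeta₁ z0 * Complex.exp (g z) := by
    intro z hz
    have hderiv : ∀ w ∈ ball (0:ℂ) (3/2), HasDerivAt (fun w => riemannZeta₁ (z0 + w) * Complex.exp (-g w)) 0 w := by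
      intro w hw
      have h1 : HasDerivAt (fun w => riemannZeta₁ (z0 + w)) (deriv riemannZeta₁ (z0 + w)) w := by
        have := (differentiable_riemannZeta₁ (z0 + w)).hasDerivAt
        exact HasDerivAt.comp_const_add z0 w this
      have h2 := (hg w hw).neg.cexp
      have h3 := h1.mul h2
      convert! h3 using 1
      have := hne w hw
      simp only [Pi.neg_apply]
      field_simp
      ring
    have hconst := (convex_ball (0:ℂ) (3/2)).is_const_of_fderivWithin_eq_zero (𝕜 := ℂ)
      (f := fun w => riemannZeta₁ (z0 + w) * Complex.exp (-g w))
      (fun w hw => (hderiv w hw).differentiableAt.differentiableWithinAt)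
      (fun w hw => by
        rw [fderivWithin_of_isOpen isOpen_ball hw]
        have := (hderiv w hw).hasFDerivAt.fderiv
        rw [this]; ext; simp) hz (mem_ball_self (by norm_num : (0:ℝ) < 3/2))
    simp only [add_zero, hg0, neg_zero, Complex.exp_zero, mul_one] at hconst
    rw [← hconst, mul_assoc, ← Complex.exp_add]; simp
  have hgd : DifferentiableOn ℂ g (ball 0 (3/2)) :=
    fun z hz => (hg z hz).differentiableAt.differentiableWithinAt
  have hmaps : MapsTo g (ball 0 (3/2)) {z | z.re ≤ M} := by
    intro z hz
    have h1 := congrArg norm (hexp z hz)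
    rw [norm_mul, Complex.norm_exp] at h1
    have h2 := zeta1_bound (hball z hz).le
    have hz' : ‖z‖ < 3/2 := by simpa using hz
    have h3 : ‖z0 + z‖ ≤ 7/2 + |t| := by
      have h31 : ‖z0‖ ≤ 2 + |t| := by
        refine (norm_add_le _ _).trans ?_
        simp
      linarith [norm_add_le z0 z]
    have h4 : 3 * (1 + ‖z0 + z‖)^2 ≤ 3 * (5 + |t|)^2 := by
      gcongr ?_ * ?_ ^ 2
      linarith
    have h6 := hlow t
    have h7 : c * Real.exp (g z).re ≤ 3 * (5 + |t|)^2 := by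
      have : c * Real.exp (g z).re ≤ ‖riemannZeta₁ z0‖ * Real.exp (g z).re := by gcongr
      linarith
    show (g z).re ≤ M
    rw [hM, Real.le_log_iff_exp_le (by positivity)]
    have h8 : Real.exp (g z).re ≤ 3 / c * (5 + |t|)^2 := by
      rw [div_mul_eq_mul_div, le_div_iff₀ hc]; linarith
    refine h8.trans ?_
    gcongr
    rw [hA]; linarith
  have hbc : ∀ z : ℂ, ‖z‖ ≤ 3/2 - ε/2 → ‖g z‖ ≤ 6 * M / ε := by
    intro z hz
    have hzb : z ∈ ball (0:ℂ) (3/2) := by simp; linarith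
    have := borelCaratheodory_zero hMpos hgd hmaps (by norm_num) hzb hg0
    refine this.trans ?_
    rw [div_le_div_iff₀ (by linarith) hε]
    have h1 : ‖z‖ ≤ 3/2 := by linarith
    have h2 : ε / 2 ≤ 3/2 - ‖z‖ := by linarith
    have h3 : 2 * M * ‖z‖ * ε ≤ 2 * M * (3/2) * ε := by gcongr
    have h4 : 6 * M * (ε/2) ≤ 6 * M * (3/2 - ‖z‖) := by gcongr
    nlinarith
  set w : ℂ := s - z0 with hw
  have hwre : w = ((s.re - 2 : ℝ) : ℂ) := by
    apply Complex.ext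
    · simp [hw, hre0]
    · simp [hw, him0, ht]
  have hwn : ‖w‖ ≤ 3/2 - ε := by
    rw [hwre, Complex.norm_real, Real.norm_eq_abs, abs_le]; constructor <;> linarith
  have hwb : w ∈ ball (0:ℂ) (3/2) := by simp; linarith
  have hcl : closedBall w (ε/2) ⊆ ball (0:ℂ) (3/2) := by
    intro z hz
    have h1 : ‖z - w‖ ≤ ε/2 := by simpa [dist_eq_norm] using hz
    have h2 : ‖z‖ ≤ ‖z - w‖ + ‖w‖ := by simpa using norm_add_le (z - w) w
    simp; linarith
  have hC := norm_deriv_le_of_forall_mem_sphere_norm_le (c := w) (R := ε/2) (C := 6 * M / ε) (f := g)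
    (by positivity) ((hgd.mono hcl).diffContOnCl_ball subset_rfl) (by
      intro z hz
      apply hbc
      have h1 : ‖z - w‖ = ε/2 := by simpa [dist_eq_norm] using hz
      have h2 : ‖z‖ ≤ ‖z - w‖ + ‖w‖ := by simpa using norm_add_le (z - w) w
      linarith)
  rw [(hg w hwb).deriv] at hC
  have hsw : z0 + w = s := by rw [hw]; ring
  rw [hsw] at hC
  refine hC.trans ?_
  have : 6 * M / ε / (ε / 2) = 12 / ε^2 * M := by field_simp; ring
  rw [this, mul_assoc]
  gcongr
  rw [hMeq]; nlinarith
end D1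

namespace D1
open Complex Set Filter Topology FourierTransform ENNReal
open scoped SchwartzMap

lemma plancherel_F (g : ℝ → ℂ) (hg : Integrable g) (hg2 : MemLp g 2) :
    ∫⁻ x, ‖𝓕 g x‖ₑ ^ 2 = ∫⁻ x, ‖g x‖ₑ ^ 2 := by
  set G : Lp ℂ 2 (volume : Measure ℝ) := hg2.toLp g with hG
  have hcont : Continuous (𝓕 g) := by
    have := VectorFourier.fourierIntegral_continuous (L := innerₗ ℝ) (μ := volume)
      Real.continuous_fourierChar continuous_inner hg
    exact this
  have hae : ∀ᵐ x, (𝓕 G : Lp ℂ 2 (volume : Measure ℝ)) x = 𝓕 g x := by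
    apply ae_eq_of_integral_contDiff_smul_eq
    · exact (Lp.memLp _).locallyIntegrable (by norm_num)
    · exact hcont.locallyIntegrable
    · intro φ hφ hφc
      have hg₁ : HasCompactSupport (Complex.ofRealCLM ∘ φ) := hφc.comp_left rfl
      have hg₂ : ContDiff ℝ (⊤ : ℕ∞) (Complex.ofRealCLM ∘ φ) := by fun_prop
      have h1 := DFunLike.congr_fun (Lp.fourier_toTemperedDistribution_eq G)
        (hg₁.toSchwartzMap hg₂)
      rw [TemperedDistribution.fourier_apply] at h1
      simp only [Lp.toTemperedDistribution_apply] at h1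
      have h2 : ∫ x, φ x • (𝓕 G : Lp ℂ 2 (volume : Measure ℝ)) x
          = ∫ x, (hg₁.toSchwartzMap hg₂) x • (𝓕 G : Lp ℂ 2 (volume : Measure ℝ)) x := by
        simp
      rw [h2, ← h1]
      have h3 := VectorFourier.integral_fourierIntegral_smul_eq_flip (L := innerₗ ℝ)
        (μ := volume) (ν := volume)
        Real.continuous_fourierChar continuous_inner (hg₁.toSchwartzMap hg₂).integrable hg
      have h4 : ∫ x, (𝓕 (hg₁.toSchwartzMap hg₂)) x • G x
          = ∫ x, (𝓕 (hg₁.toSchwartzMap hg₂)) x • g x := by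
        apply integral_congr_ae
        filter_upwards [hg2.coeFn_toLp] with x hx
        rw [hG, hx]
      rw [h4]
      rw [SchwartzMap.fourier_coe]
      refine Eq.trans ?_ (h3.trans ?_)
      · rfl
      · apply integral_congr_ae
        filter_upwards with x
        simp
        left
        simp [Real.fourier_eq, VectorFourier.fourierIntegral]
  have hn := Lp.norm_fourier_eq G
  rw [Lp.norm_def, Lp.norm_def] at hn
  have hn' : eLpNorm (𝓕 G : Lp ℂ 2 (volume : Measure ℝ)) 2 volume = eLpNorm G 2 volume := by
    rwa [ENNReal.toReal_eq_toReal_iff' (Lp.memLp _).2.ne (Lp.memLp _).2.ne] at hn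
  rw [eLpNorm_congr_ae hae, eLpNorm_congr_ae hg2.coeFn_toLp] at hn'
  rw [eLpNorm_eq_lintegral_rpow_enorm_toReal (by norm_num) (by norm_num),
    eLpNorm_eq_lintegral_rpow_enorm_toReal (by norm_num) (by norm_num)] at hn'
  have := congrArg (fun t => t ^ (2:ℝ)) hn'
  simp only [← ENNReal.rpow_mul] at this
  norm_num at this
  exact this

lemma plancherel (g : ℝ → ℂ) (hg : Integrable g) (hg2 : MemLp g 2) :
    ∫⁻ x, ‖𝓕⁻ g x‖ₑ ^ 2 = ∫⁻ x, ‖g x‖ₑ ^ 2 := by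
  rw [← plancherel_F g hg hg2]
  have : ∀ x, 𝓕⁻ g x = 𝓕 g (-x) := fun x => Real.fourierInv_eq_fourier_neg g x
  simp only [this]
  exact (MeasurePreserving.lintegral_comp_emb (Measure.measurePreserving_neg volume)
    (MeasurableEquiv.neg ℝ).measurableEmbedding (fun x => ‖𝓕 g x‖ₑ ^ 2))
end D1

namespace D1
open Complex Set Filter Topology FourierTransform ENNReal

noncomputable def M1 (s : ℂ) : ℂ := -(1 + deriv riemannZeta₁ s / riemannZeta₁ s) / s

noncomputable def HH : ℝ → ℝ :=
  (Ioi 0).indicator (fun u => Chebyshev.psi (Real.exp u) - Real.exp u)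

lemma psi_laplace {s : ℂ} (hs : 1 < s.re) :
    s * ∫ t in Ioi (1:ℝ), (Chebyshev.psi t : ℂ) * (t:ℂ) ^ (-(s + 1)) =
      -deriv riemannZeta s / riemannZeta s := by
  rw [← ArithmeticFunction.LSeries_vonMangoldt_eq_deriv_riemannZeta_div hs]
  have hnn : ∀ n, (0:ℝ) ≤ ArithmeticFunction.vonMangoldt n :=
    fun n => ArithmeticFunction.vonMangoldt_nonneg
  have h := LSeries_eq_mul_integral_of_nonneg (fun n => ArithmeticFunction.vonMangoldt n)
    (r := 1) (by norm_num) (s := s) hs ?_ hnn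
  · rw [h]
    congr 2
    ext t
    congr 1
    rw [Chebyshev.psi]
    push_cast
    rfl
  · apply Asymptotics.IsBigO.of_bound (Real.log 4 + 4)
    filter_upwards with n
    have := Chebyshev.psi_le_const_mul_self (x := n) (by positivity)
    rw [Chebyshev.psi, Nat.floor_natCast] at this
    rw [Real.rpow_one, Real.norm_of_nonneg (Finset.sum_nonneg fun _ _ => hnn _),
      Real.norm_of_nonneg (by positivity)]
    exact this

lemma exp_image_Ioi : Real.exp '' Ioi 0 = Ioi 1 := by
  ext x; constructor
  · rintro ⟨u, hu, rfl⟩; simpa using hu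
  · intro hx
    have : (0:ℝ) < x := lt_trans one_pos hx
    exact ⟨Real.log x, Real.log_pos hx, Real.exp_log this⟩

lemma psi_laplace' {s : ℂ} (hs : 1 < s.re) :
    ∫ u in Ioi (0:ℝ), (Chebyshev.psi (Real.exp u) : ℂ) * cexp (-s * u) =
      -deriv riemannZeta s / riemannZeta s / s := by
  have hs0 : s ≠ 0 := by rintro rfl; simp at hs; linarith
  rw [← psi_laplace hs, mul_div_cancel_left₀ _ hs0]
  rw [← exp_image_Ioi, integral_image_eq_integral_abs_deriv_smul measurableSet_Ioi
    (fun x _ => (Real.hasDerivAt_exp x).hasDerivWithinAt) Real.exp_injective.injOn]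
  apply setIntegral_congr_fun measurableSet_Ioi
  intro u _
  simp only
  rw [abs_of_pos (Real.exp_pos u), Complex.real_smul, Complex.ofReal_exp,
    Complex.cpow_def_of_ne_zero (Complex.exp_ne_zero _), ← Complex.ofReal_exp, ← Complex.ofReal_log (Real.exp_pos u).le, Real.log_exp,
    Complex.ofReal_exp, mul_left_comm, ← Complex.exp_add]
  congr 2
  ring


lemma HH_bound (u : ℝ) : |HH u| ≤ (Real.log 4 + 5) * Real.exp u := by
  have h4 : 0 ≤ Real.log 4 := Real.log_nonneg (by norm_num)
  have he := Real.exp_pos u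
  unfold HH
  by_cases hu : u ∈ Ioi (0:ℝ)
  · rw [indicator_of_mem hu]
    have h1 := Chebyshev.psi_le_const_mul_self he.le
    have h2 := Chebyshev.psi_nonneg (Real.exp u)
    rw [abs_le]; constructor <;> nlinarith
  · rw [indicator_of_notMem hu]; simp; positivity

lemma HH_meas : Measurable HH := by
  unfold HH
  apply Measurable.indicator _ measurableSet_Ioi
  exact (Chebyshev.psi_mono.measurable.comp Real.measurable_exp).sub Real.measurable_exp

lemma HH_zero {u : ℝ} (hu : u ≤ 0) : HH u = 0 := by
  unfold HH; rw [indicator_of_notMem (by simpa using hu)]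

lemma HH_integrable {s : ℂ} (hs : 1 < s.re) :
    Integrable (fun u : ℝ => (HH u : ℂ) * cexp (-s * u)) := by
  have h1 : Integrable ((Ioi (0:ℝ)).indicator
      (fun u => (Real.log 4 + 5) * Real.exp ((1 - s.re) * u))) := by
    rw [integrable_indicator_iff measurableSet_Ioi]
    exact (integrableOn_exp_mul_Ioi (by linarith) 0).const_mul _
  refine h1.mono' ?_ ?_
  · apply Measurable.aestronglyMeasurable
    exact (Complex.measurable_ofReal.comp HH_meas).mul (by fun_prop)
  · filter_upwards with u
    by_cases hu : u ∈ Ioi (0:ℝ)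
    · rw [indicator_of_mem hu, norm_mul, Complex.norm_exp, Complex.norm_real, Real.norm_eq_abs]
      have := HH_bound u
      have h3 : (-s * u).re = -s.re * u := by simp
      rw [h3, show (1 - s.re) * u = u + -s.re * u by ring, Real.exp_add, ← mul_assoc]
      gcongr
    · rw [indicator_of_notMem hu, HH_zero (by simpa using hu)]; simp

lemma HH_laplace {s : ℂ} (hs : 1 < s.re) :
    ∫ u : ℝ, (HH u : ℂ) * cexp (-s * u) = M1 s := by
  have hs0 : s ≠ 0 := by rintro rfl; simp at hs; linarith
  have hs1 : s ≠ 1 := by rintro rfl; simp at hs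
  have h0 : (fun u : ℝ => (HH u : ℂ) * cexp (-s * u)) =
      (Ioi (0:ℝ)).indicator (fun u : ℝ => (Chebyshev.psi (Real.exp u) : ℂ) * cexp (-s * u)
        - cexp ((1 - s) * u)) := by
    ext u
    unfold HH
    by_cases hu : u ∈ Ioi (0:ℝ)
    · rw [indicator_of_mem hu, indicator_of_mem hu]
      push_cast
      rw [sub_mul, ← Complex.exp_add]
      congr 3; ring
    · rw [indicator_of_notMem hu, indicator_of_notMem hu]; simp
  have hi2 : IntegrableOn (fun u : ℝ => cexp ((1 - s) * u)) (Ioi 0) :=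
    integrableOn_exp_mul_complex_Ioi (by simpa using hs) 0
  have hi1 : IntegrableOn (fun u : ℝ => (Chebyshev.psi (Real.exp u) : ℂ) * cexp (-s * u)) (Ioi 0) := by
    have := HH_integrable hs
    rw [h0, integrable_indicator_iff measurableSet_Ioi] at this
    have h := this.add hi2
    refine h.congr ?_
    filter_upwards with u
    simp
  rw [h0, integral_indicator measurableSet_Ioi, integral_sub hi1 hi2, psi_laplace' hs,
    integral_exp_mul_complex_Ioi (by simpa using hs)]
  rw [deriv_riemannZeta_eq_neg_inv_sub_sq_mul_add hs1]
  have hz : riemannZeta s ≠ 0 := riemannZeta_ne_zero_of_one_lt_re hs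
  rw [riemannZeta_eq_inv_sub_mul hs1] at hz ⊢
  have hz1 : riemannZeta₁ s ≠ 0 := right_ne_zero_of_mul hz
  have h3 : s - 1 ≠ 0 := sub_ne_zero.mpr hs1
  have h4 : 1 - s ≠ 0 := sub_ne_zero.mpr hs1.symm
  unfold M1
  simp only [Complex.ofReal_zero, mul_zero, Complex.exp_zero]
  rw [show (1 - s) = -(s-1) by ring]
  field_simp
  ring

noncomputable def KK (u : ℝ) : ℝ := ∫ t in Iic u, HH t

lemma HH_locInt : LocallyIntegrable HH := by
  rw [locallyIntegrable_iff]
  intro k hk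
  obtain ⟨R, hR⟩ := hk.isBounded.subset_closedBall 0
  refine IntegrableOn.mono_set ?_ hR
  refine Measure.integrableOn_of_bounded (M := (Real.log 4 + 5) * Real.exp R) ?_ ?_ ?_
  · exact (isCompact_closedBall _ _).measure_lt_top.ne
  · exact HH_meas.aestronglyMeasurable
  · filter_upwards [ae_restrict_mem measurableSet_closedBall] with x hx
    have h4 : 0 ≤ Real.log 4 := Real.log_nonneg (by norm_num)
    have : x ≤ R := by
      have := mem_closedBall_zero_iff.mp hx
      exact (le_abs_self x).trans this
    refine (HH_bound x).trans ?_
    gcongr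

lemma HH_intIic (u : ℝ) : IntegrableOn HH (Iic u) := by
  have h1 : IntegrableOn HH (Icc 0 (max u 0)) := HH_locInt.integrableOn_isCompact isCompact_Icc
  have h2 : IntegrableOn HH (Iic 0) := by
    refine (integrableOn_zero).congr_fun (fun x hx => (HH_zero hx).symm) measurableSet_Iic
  refine (h2.union h1).mono_set ?_
  intro x hx
  rcases le_total x 0 with h | h
  · left; exact h
  · right; exact ⟨h, (show x ≤ u from hx).trans (le_max_left _ _)⟩

lemma KK_sub (a b : ℝ) : KK b - KK a = ∫ t in a..b, HH t := by
  unfold KK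
  exact (intervalIntegral.integral_Iic_sub_Iic (HH_intIic _) (HH_intIic _))

lemma KK_cont : Continuous KK := by
  have : KK = fun u => KK 0 + ∫ t in (0:ℝ)..u, HH t := by
    ext u; rw [← KK_sub]; ring
  rw [this]
  exact continuous_const.add (intervalIntegral.continuous_primitive
    (fun a b => (HH_locInt.integrableOn_isCompact isCompact_uIcc).intervalIntegrable) 0)
end D1

namespace D1
open Complex Set Filter Topology FourierTransform ENNReal
open scoped Convolution

noncomputable def vs (σ ξ : ℝ) : ℂ := (σ:ℂ) + 2 * π * ξ * I

lemma vs_re (σ ξ : ℝ) : (vs σ ξ).re = σ := by simp [vs]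
lemma vs_im (σ ξ : ℝ) : (vs σ ξ).im = 2 * π * ξ := by simp [vs]

noncomputable def f1 (u : ℝ) : ℂ := (HH u : ℂ) * cexp (-2 * u)
noncomputable def f2 : ℝ → ℂ := (Ici (0:ℝ)).indicator (fun u => cexp (-2 * u))

lemma f1_int : Integrable f1 := by
  have := HH_integrable (s := 2) (by norm_num)
  exact this

lemma f2_int : Integrable f2 := by
  unfold f2
  rw [integrable_indicator_iff measurableSet_Ici, integrableOn_Ici_iff_integrableOn_Ioi]
  exact integrableOn_exp_mul_complex_Ioi (by norm_num) 0

lemma conv_eq : (f1 ⋆[ContinuousLinearMap.mul ℂ ℂ] f2) = fun u => (KK u : ℂ) * cexp (-2 * u) := by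
  ext u
  rw [convolution_def]
  unfold KK
  rw [← integral_indicator measurableSet_Iic, ← integral_complex_ofReal, ← integral_mul_const]
  congr 1
  ext t
  simp only [ContinuousLinearMap.mul_apply', f1, f2]
  by_cases h : t ≤ u
  · rw [indicator_of_mem (show u - t ∈ Ici (0:ℝ) by simpa using h), indicator_of_mem (show t ∈ Iic u from h), mul_assoc, ← Complex.exp_add]
    congr 2
    push_cast; ring
  · rw [indicator_of_notMem (show u - t ∉ Ici (0:ℝ) by simpa using h), indicator_of_notMem (show t ∉ Iic u from h)]
    simp

noncomputable def gK (u : ℝ) : ℂ := (KK u : ℂ) * cexp (-2 * u)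

lemma gK_int : Integrable gK := by
  have := f1_int.integrable_convolution (ContinuousLinearMap.mul ℂ ℂ) f2_int
  rw [conv_eq] at this
  exact this

lemma gK_cont : Continuous gK := by
  unfold gK
  exact (Complex.continuous_ofReal.comp KK_cont).mul (by fun_prop)

noncomputable def N1 (s : ℂ) : ℂ := M1 s / s

lemma four_gK (ξ : ℝ) : 𝓕 gK ξ = N1 (vs 2 ξ) := by
  have h0 : gK = (f1 ⋆[ContinuousLinearMap.mul ℂ ℂ] f2) := conv_eq.symm
  rw [h0, Real.fourier_mul_convolution_eq f1_int f2_int]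
  have h1 : 𝓕 f1 ξ = M1 (vs 2 ξ) := by
    rw [← HH_laplace (by rw [vs_re]; norm_num), Real.fourier_real_eq_integral_exp_smul]
    congr 1; ext u
    simp only [f1, vs, smul_eq_mul]
    rw [mul_left_comm, ← Complex.exp_add]
    congr 2; push_cast; ring
  have h2 : 𝓕 f2 ξ = 1 / (vs 2 ξ) := by
    rw [Real.fourier_real_eq_integral_exp_smul]
    have : (fun v : ℝ => cexp (↑(-2 * π * v * ξ) * I) • f2 v) =
        (Ici (0:ℝ)).indicator (fun u : ℝ => cexp (-(vs 2 ξ) * u)) := by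
      ext u
      simp only [f2]
      by_cases h : u ∈ Ici (0:ℝ)
      · rw [indicator_of_mem h, indicator_of_mem h, smul_eq_mul, ← Complex.exp_add]
        congr 1; simp only [vs]; push_cast; ring
      · rw [indicator_of_notMem h, indicator_of_notMem h]; simp
    rw [this, integral_indicator measurableSet_Ici, integral_Ici_eq_integral_Ioi,
      integral_exp_mul_complex_Ioi (by simp [vs])]
    simp
  rw [h1, h2, N1]; ring

/-- bound for `M1` on vertical strips -/
lemma M1_bound (hRH : RiemannHypothesis) {ε a : ℝ} (hε : 0 < ε) (hε1 : ε ≤ 1/2) (ha : 0 < a)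
    (ha1 : a ≤ 1) :
    ∃ C, 0 < C ∧ ∀ s : ℂ, 1/2 + ε ≤ s.re → s.re ≤ 2 →
      ‖M1 s‖ ≤ C * (1 + |s.im|) ^ (-1 + a) := by
  obtain ⟨C, hC, h⟩ := logDeriv_bound hRH hε hε1
  refine ⟨(2 + C * (6 / a)) * 4, by positivity, fun s h1 h2 => ?_⟩
  set t := 1 + |s.im| with ht
  have ht1 : 1 ≤ t := by rw [ht]; linarith [abs_nonneg s.im]
  have hlog : Real.log (5 + |s.im|) ≤ 5 / a * t ^ a := by
    have h3 : Real.log (5 + |s.im|) ≤ (5 + |s.im|) ^ a / a :=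
      Real.log_le_rpow_div (by positivity) ha
    have h4 : (5 + |s.im|) ^ a ≤ (5 * t) ^ a := by
      apply Real.rpow_le_rpow (by positivity) _ ha.le
      rw [ht]; linarith [abs_nonneg s.im]
    rw [Real.mul_rpow (by norm_num) (by linarith)] at h4
    have h5 : (5:ℝ) ^ a ≤ 5 := by
      have := Real.rpow_le_rpow_of_exponent_le (x := 5) (by norm_num) ha1
      simpa using this
    have h6 : 0 < t ^ a := by positivity
    calc _ ≤ (5 + |s.im|) ^ a / a := h3
      _ ≤ 5 * t ^ a / a := by gcongr; nlinarith
      _ = _ := by ring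
  have hta : 1 ≤ t ^ a := Real.one_le_rpow ht1 ha.le
  have hnum : ‖1 + deriv riemannZeta₁ s / riemannZeta₁ s‖ ≤ (2 + C * (6 / a)) * t ^ a := by
    refine (norm_add_le _ _).trans ?_
    rw [norm_one]
    have := h s h1 h2
    have h7 : C * Real.log (5 + |s.im|) ≤ C * (5 / a * t ^ a) := by gcongr
    have h8 : C * (5 / a * t ^ a) ≤ C * (6 / a) * t ^ a := by
      rw [← mul_assoc]; gcongr; norm_num
    nlinarith
  have hden : t / 4 ≤ ‖s‖ := by
    have h3 := Complex.abs_im_le_norm s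
    have h4 := Complex.re_le_norm s
    rw [ht]; linarith [abs_nonneg s.im]
  have ht0 : 0 < t := by linarith
  unfold M1
  rw [norm_div, norm_neg, div_le_iff₀ (by linarith)]
  have e1 : t ^ (-1 + a) = t ^ a / t := by
    rw [add_comm, ← sub_eq_add_neg, Real.rpow_sub_one ht0.ne']
  rw [e1]
  calc _ ≤ (2 + C * (6 / a)) * t ^ a := hnum
    _ = (2 + C * (6 / a)) * 4 * (t ^ a / t) * (t/4) := by field_simp
    _ ≤ _ := by gcongr
end D1

namespace D1
open Complex Set Filter Topology FourierTransform ENNReal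

lemma vert_int {f : ℂ → ℂ} {a C p : ℝ} (hp : 1 < p)
    (hd : ∀ s : ℂ, s.re = a → ContinuousAt f s)
    (hb : ∀ s : ℂ, s.re = a → ‖f s‖ ≤ C * (1 + |s.im|) ^ (-p)) :
    Integrable (fun y : ℝ => f (a + y * I)) := by
  have h1 : Integrable (fun y : ℝ => C * (1 + ‖y‖) ^ (-p)) :=
    (integrable_one_add_norm (by simpa using hp)).const_mul C
  refine h1.mono' ?_ ?_
  · apply Continuous.aestronglyMeasurable
    rw [continuous_iff_continuousAt]
    intro y
    exact ContinuousAt.comp (f := fun y : ℝ => (a:ℂ) + y * I) (hd _ (by simp)) (by fun_prop)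
  · filter_upwards with y
    simpa using hb (a + y * I) (by simp)

lemma shift {f : ℂ → ℂ} {a b C p : ℝ} (hab : a ≤ b) (hp : 1 < p)
    (hd : ∀ s : ℂ, a ≤ s.re → s.re ≤ b → DifferentiableAt ℂ f s)
    (hb : ∀ s : ℂ, a ≤ s.re → s.re ≤ b → ‖f s‖ ≤ C * (1 + |s.im|) ^ (-p)) :
    ∫ y : ℝ, f (a + y * I) = ∫ y : ℝ, f (b + y * I) := by
  have ia : Integrable (fun y : ℝ => f (a + y * I)) := vert_int hp
    (fun s hs => (hd s hs.ge (hs.le.trans hab)).continuousAt)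
    (fun s hs => hb s hs.ge (hs.le.trans hab))
  have ib : Integrable (fun y : ℝ => f (b + y * I)) := vert_int hp
    (fun s hs => (hd s (hab.trans hs.ge) hs.le).continuousAt)
    (fun s hs => hb s (hab.trans hs.ge) hs.le)
  have ta := intervalIntegral_tendsto_integral (μ := volume) (l := atTop) ia tendsto_neg_atTop_atBot
    (tendsto_id (α := ℝ))
  have tb := intervalIntegral_tendsto_integral (μ := volume) (l := atTop) ib tendsto_neg_atTop_atBot
    (tendsto_id (α := ℝ))
  have hrect : ∀ T : ℝ, (((∫ x : ℝ in a..b, f (x + (-T : ℝ) * I)) - ∫ x : ℝ in a..b, f (x + (T:ℝ) * I)) +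
      I • ∫ y : ℝ in (-T)..T, f (b + y * I)) - I • ∫ y : ℝ in (-T)..T, f (a + y * I) = 0 := by
    intro T
    have := Complex.integral_boundary_rect_eq_zero_of_differentiableOn f
      (a + (-T : ℝ) * I) (b + (T:ℝ) * I) ?_
    · simpa using this
    · intro s hs
      apply DifferentiableAt.differentiableWithinAt
      have hs1 : s.re ∈ uIcc a b := by
        have := hs.1; simpa using this
      rw [uIcc_of_le hab] at hs1
      exact hd s hs1.1 hs1.2
  have hh : Tendsto (fun T : ℝ => C * (1 + |T|) ^ (-p) * |b - a|) atTop (𝓝 0) := by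
    have h1 : Tendsto (fun T : ℝ => (1 + |T|)) atTop atTop :=
      tendsto_atTop_add_const_left _ _ tendsto_abs_atTop_atTop
    have h2 := (tendsto_rpow_neg_atTop (by linarith : 0 < p)).comp h1
    have := (h2.const_mul C).mul_const |b - a|
    simpa using this
  have hor1 : Tendsto (fun T : ℝ => ∫ x : ℝ in a..b, f (x + (-T : ℝ) * I)) atTop (𝓝 0) := by
    apply squeeze_zero_norm _ hh
    intro T
    apply intervalIntegral.norm_integral_le_of_norm_le_const
    intro x hx
    rw [uIoc_of_le hab] at hx
    have := hb (x + (-T : ℝ) * I) (by simpa using hx.1.le) (by simpa using hx.2)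
    simpa using this
  have hor2 : Tendsto (fun T : ℝ => ∫ x : ℝ in a..b, f (x + (T : ℝ) * I)) atTop (𝓝 0) := by
    apply squeeze_zero_norm _ hh
    intro T
    apply intervalIntegral.norm_integral_le_of_norm_le_const
    intro x hx
    rw [uIoc_of_le hab] at hx
    have := hb (x + (T : ℝ) * I) (by simpa using hx.1.le) (by simpa using hx.2)
    simpa using this
  have htot := ((hor1.sub hor2).add (tb.const_smul I)).sub (ta.const_smul I)
  simp only [id] at htot
  have h0 := tendsto_nhds_unique htot (by simp only [hrect]; exact tendsto_const_nhds)
  simp only [sub_zero, zero_add, smul_eq_mul] at h0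
  rw [← mul_sub] at h0
  have := (mul_eq_zero.mp h0).resolve_left I_ne_zero
  exact (sub_eq_zero.mp this).symm

lemma vs_eq (σ ξ : ℝ) : vs σ ξ = (σ:ℂ) + ((2 * π * ξ : ℝ) : ℂ) * I := by
  simp [vs]

lemma N1_bound (hRH : RiemannHypothesis) {ε a : ℝ} (hε : 0 < ε) (hε1 : ε ≤ 1/2) (ha : 0 < a)
    (ha1 : a ≤ 1) :
    ∃ C, 0 < C ∧ ∀ s : ℂ, 1/2 + ε ≤ s.re → s.re ≤ 2 →
      ‖N1 s‖ ≤ C * (1 + |s.im|) ^ (-2 + a) := by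
  obtain ⟨C, hC, h⟩ := M1_bound hRH hε hε1 ha ha1
  refine ⟨C * 4, by positivity, fun s h1 h2 => ?_⟩
  have hden : (1 + |s.im|) / 4 ≤ ‖s‖ := by
    have h3 := Complex.abs_im_le_norm s
    have h4 := Complex.re_le_norm s
    linarith [abs_nonneg s.im]
  have h0 : 0 < 1 + |s.im| := by positivity
  unfold N1
  rw [norm_div, div_le_iff₀ (by linarith)]
  have e1 : (1 + |s.im|) ^ (-1 + a) = (1 + |s.im|) ^ (-2 + a) * (1 + |s.im|) := by
    rw [← Real.rpow_add_one h0.ne']; congr 1; ring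
  calc _ ≤ C * (1 + |s.im|) ^ (-1 + a) := h s h1 h2
    _ = C * 4 * (1 + |s.im|) ^ (-2 + a) * ((1 + |s.im|) / 4) := by rw [e1]; ring
    _ ≤ _ := by gcongr

lemma M1_diff (hRH : RiemannHypothesis) {s : ℂ} (hs : 1/2 < s.re) : DifferentiableAt ℂ M1 s := by
  have hs0 : s ≠ 0 := by rintro rfl; simp at hs; linarith
  unfold M1
  have h1 : DifferentiableAt ℂ (deriv riemannZeta₁) s :=
    (differentiable_riemannZeta₁.contDiff (n := 2)).differentiable_deriv_two s
  have h2 : DifferentiableAt ℂ riemannZeta₁ s := differentiable_riemannZeta₁ s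
  exact ((h1.div h2 (zeta1_ne_zero hRH hs)).const_add 1).neg.div differentiableAt_id hs0

lemma N1_diff (hRH : RiemannHypothesis) {s : ℂ} (hs : 1/2 < s.re) : DifferentiableAt ℂ N1 s := by
  have hs0 : s ≠ 0 := by rintro rfl; simp at hs; linarith
  exact (M1_diff hRH hs).div differentiableAt_id hs0

lemma vs_int (f : ℂ → ℂ) (σ : ℝ) (h : Integrable (fun y : ℝ => f (σ + y * I))) :
    Integrable (fun ξ : ℝ => f (vs σ ξ)) := by
  simp only [vs_eq]
  exact h.comp_mul_left' (by positivity : (2 * π : ℝ) ≠ 0)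

lemma vs_integral (f : ℂ → ℂ) (σ : ℝ) :
    ∫ ξ : ℝ, f (vs σ ξ) = |(2 * π)⁻¹| • ∫ y : ℝ, f (σ + y * I) := by
  simp only [vs_eq]
  exact Measure.integral_comp_mul_left (fun y : ℝ => f (σ + y * I)) (2 * π)

lemma KK_repr (hRH : RiemannHypothesis) {σ : ℝ} (hσ : 1/2 < σ) (hσ1 : σ ≤ 1) (u : ℝ) :
    (KK u : ℂ) = ∫ ξ : ℝ, N1 (vs σ ξ) * cexp (vs σ ξ * u) := by
  obtain ⟨C, hC, hN⟩ := N1_bound hRH (ε := σ - 1/2) (a := 1/2) (by linarith) (by linarith)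
    (by norm_num) (by norm_num)
  have hNi : Integrable (fun ξ : ℝ => N1 (vs 2 ξ)) := by
    apply vs_int
    apply vert_int (C := C) (p := 3/2) (by norm_num)
    · intro s hs; exact (N1_diff hRH (by norm_num at hs ⊢; linarith)).continuousAt
    · intro s hs
      have := hN s (by norm_num at hs; linarith) (by norm_num at hs; linarith)
      norm_num at this ⊢; exact this
  have hF : 𝓕 gK = fun ξ => N1 (vs 2 ξ) := by ext ξ; exact four_gK ξ
  have hinv := gK_cont.fourierInv_fourier_eq gK_int (by rw [hF]; exact hNi)
  have h1 := congrFun hinv u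
  rw [hF, Real.fourierInv_eq'] at h1
  have h2 : (KK u : ℂ) = ∫ ξ : ℝ, N1 (vs 2 ξ) * cexp (vs 2 ξ * u) := by
    have : (KK u : ℂ) = gK u * cexp (2 * u) := by
      unfold gK; rw [mul_assoc, ← Complex.exp_add]; simp
    rw [this, ← h1, ← integral_mul_const]
    congr 1; ext ξ
    rw [smul_eq_mul, mul_right_comm, ← Complex.exp_add, mul_comm]
    congr 2
    simp [vs]; ring
  rw [h2, vs_integral (fun s => N1 s * cexp (s * u)), vs_integral (fun s => N1 s * cexp (s * u))]
  congr 1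
  symm
  apply shift (f := fun s => N1 s * cexp (s * u)) (a := σ) (b := 2) (C := C * Real.exp (2 * |u|)) (p := 3/2) (by linarith) (by norm_num)
  · intro s h3 h4
    exact (N1_diff hRH (by linarith)).mul (by fun_prop)
  · intro s h3 h4
    rw [norm_mul, Complex.norm_exp, mul_right_comm]
    have h5 := hN s (by linarith) h4
    norm_num at h5 ⊢
    have h6 : s.re * u ≤ 2 * |u| := by
      have := le_abs_self u
      have := abs_nonneg u
      nlinarith
    gcongr
end D1

namespace D1
open Complex Set Filter Topology FourierTransform ENNReal

lemma exp_sub_one_le (z : ℂ) {b : ℝ} (hb : 0 ≤ b) (hz : z.re ≤ b) :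
    ‖cexp z - 1‖ ≤ Real.exp b * ‖z‖ := by
  have hconv : Convex ℝ {w : ℂ | w.re ≤ b} := convex_halfSpace_re_le b
  have := hconv.norm_image_sub_le_of_norm_deriv_le (𝕜 := ℂ) (f := cexp) (C := Real.exp b) (x := 0) (y := z)
    (fun x _ => Complex.differentiableAt_exp) (fun x hx => by
      rw [Complex.deriv_exp, Complex.norm_exp]; exact Real.exp_le_exp.mpr hx) (by simpa using hb) hz
  simpa using this

lemma exp_sub_one_le' (z : ℂ) (hz : z.re ≤ 1) {r : ℝ} (hr : 0 ≤ r) (hr1 : r ≤ 1) :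
    ‖cexp z - 1‖ ≤ 4 * ‖z‖ ^ r := by
  have he : Real.exp 1 ≤ 3 := by linarith [Real.exp_one_lt_d9]
  rcases le_total ‖z‖ 1 with h | h
  · have h1 := exp_sub_one_le z zero_le_one hz
    have h2 : ‖z‖ ≤ ‖z‖ ^ r := by
      rcases eq_or_lt_of_le (norm_nonneg z) with h0 | h0
      · rw [← h0]; positivity
      · have := Real.rpow_le_rpow_of_exponent_ge h0 h hr1
        simpa using this
    nlinarith [norm_nonneg z]
  · have h1 : ‖cexp z - 1‖ ≤ 4 := by
      refine (norm_sub_le _ _).trans ?_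
      rw [Complex.norm_exp, norm_one]
      have := Real.exp_le_exp.mpr hz
      linarith
    have h2 : 1 ≤ ‖z‖ ^ r := Real.one_le_rpow h hr
    linarith

noncomputable def Gs (lam κ : ℝ) (s : ℂ) : ℂ :=
  N1 s * ((cexp (s * lam) - 1) * (cexp (s * κ) - 1) / κ)

lemma norm_vs_le {σ : ℝ} (hσ : 0 < σ) (hσ1 : σ ≤ 1) (ξ : ℝ) : ‖vs σ ξ‖ ≤ 1 + |(vs σ ξ).im| := by
  have := Complex.norm_le_abs_re_add_abs_im (vs σ ξ)
  rw [vs_re, abs_of_pos hσ] at this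
  linarith

lemma Gs_repr (hRH : RiemannHypothesis) {σ : ℝ} (hσ : 1/2 < σ) (hσ1 : σ ≤ 1) {lam κ : ℝ}
    (hl : 0 < lam) (hl1 : lam ≤ 1) (hκ : 0 < κ) (hκ1 : κ ≤ 1) :
    Integrable (fun ξ => Gs lam κ (vs σ ξ)) ∧ ∀ u : ℝ, 𝓕⁻ (fun ξ => Gs lam κ (vs σ ξ)) u =
      ((κ⁻¹ * (KK (u + lam + κ) - KK (u + lam)) - κ⁻¹ * (KK (u + κ) - KK u) : ℝ) : ℂ) *
        cexp (-σ * u) := by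
  obtain ⟨C, hC, hN⟩ := N1_bound hRH (ε := σ - 1/2) (a := 1/2) (by linarith) (by linarith)
    (by norm_num) (by norm_num)
  have key : ∀ (v : ℝ), Integrable (fun ξ : ℝ => N1 (vs σ ξ) * cexp (vs σ ξ * v)) := by
    intro v
    apply vs_int (fun s => N1 s * cexp (s * v))
    apply vert_int (f := fun s => N1 s * cexp (s * v)) (C := C * Real.exp (σ * v)) (p := 3/2) (by norm_num)
    · intro s hs; exact (((N1_diff hRH (by linarith)).mul (by fun_prop : DifferentiableAt ℂ (fun s => cexp (s * v)) s))).continuousAt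
    · intro s hs
      have := hN s (by linarith) (by linarith)
      rw [norm_mul, Complex.norm_exp, mul_right_comm]
      norm_num at this ⊢
      rw [hs]
      gcongr
  have hκ0 : (κ:ℂ) ≠ 0 := by exact_mod_cast hκ.ne'
  have hexp : ∀ (u ξ : ℝ), Gs lam κ (vs σ ξ) * cexp (vs σ ξ * u) =
      (κ:ℂ)⁻¹ * (N1 (vs σ ξ) * cexp (vs σ ξ * (u + lam + κ : ℝ)) - N1 (vs σ ξ) * cexp (vs σ ξ * (u + lam : ℝ)))
      - (κ:ℂ)⁻¹ * (N1 (vs σ ξ) * cexp (vs σ ξ * (u + κ : ℝ)) - N1 (vs σ ξ) * cexp (vs σ ξ * u)) := by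
    intro u ξ
    unfold Gs
    push_cast
    simp only [mul_add, Complex.exp_add]
    field_simp
  have key2 : ∀ (v w : ℝ), Integrable (fun ξ : ℝ => (κ:ℂ)⁻¹ *
      (N1 (vs σ ξ) * cexp (vs σ ξ * v) - N1 (vs σ ξ) * cexp (vs σ ξ * w))) :=
    fun v w => ((key v).sub (key w)).const_mul _
  have hi : ∀ u : ℝ, Integrable (fun ξ => Gs lam κ (vs σ ξ) * cexp (vs σ ξ * u)) := by
    intro u
    simp only [hexp]
    exact (key2 _ _).sub (key2 _ _)
  refine ⟨by simpa using hi 0, fun u => ?_⟩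
  have h1 : ∫ ξ, Gs lam κ (vs σ ξ) * cexp (vs σ ξ * u) =
      ((κ⁻¹ * (KK (u + lam + κ) - KK (u + lam)) - κ⁻¹ * (KK (u + κ) - KK u) : ℝ) : ℂ) := by
    simp only [hexp]
    rw [integral_sub (key2 _ _) (key2 _ _),
      integral_const_mul, integral_const_mul, integral_sub (key _) (key _),
      integral_sub (key _) (key _)]
    simp only [← KK_repr hRH hσ hσ1]
    push_cast; ring
  rw [← h1, Real.fourierInv_eq', ← integral_mul_const]
  congr 1; ext ξ
  rw [smul_eq_mul, mul_assoc (Gs _ _ _), ← Complex.exp_add, mul_comm]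
  congr 2
  simp [vs]; ring

lemma Gs_bound (hRH : RiemannHypothesis) {ε : ℝ} (hε : 0 < ε) (hε1 : ε ≤ 1/2) :
    ∃ C, 0 < C ∧ ∀ lam κ : ℝ, 0 < lam → lam ≤ 1 → 0 < κ → κ ≤ 1 → ∀ ξ : ℝ,
      ‖Gs lam κ (vs (1/2 + ε) ξ)‖ ^ 2 ≤ C * lam ^ (1 - ε) * (1 + ‖ξ‖) ^ (-(1 + ε / 2)) := by
  obtain ⟨C, hC, hM⟩ := M1_bound hRH (ε := ε) (a := ε / 4) hε hε1 (by linarith) (by linarith)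
  refine ⟨(C * 3 * 4) ^ 2, by positivity, fun lam κ hl hl1 hκ hκ1 ξ => ?_⟩
  set s := vs (1/2 + ε) ξ with hs
  set t := 1 + |s.im| with ht
  have hsre : s.re = 1/2 + ε := vs_re _ _
  have ht0 : 0 < t := by positivity
  have hst : ‖s‖ ≤ t := norm_vs_le (by linarith) (by linarith) ξ
  have hs0 : s ≠ 0 := by intro h; rw [h] at hsre; simp at hsre; linarith
  have he : Real.exp 1 ≤ 3 := by linarith [Real.exp_one_lt_d9]
  have h1 : ‖cexp (s * lam) - 1‖ ≤ 4 * (t * lam) ^ ((1 - ε) / 2) := by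
    have := exp_sub_one_le' (s * lam) (by simp [hsre]; nlinarith) (r := (1 - ε)/2) (by linarith) (by linarith)
    refine this.trans ?_
    rw [norm_mul, Complex.norm_real, Real.norm_of_nonneg hl.le]
    gcongr
    linarith
  have h2 : ‖cexp (s * κ) - 1‖ ≤ 3 * (‖s‖ * κ) := by
    have := exp_sub_one_le (s * κ) zero_le_one (by simp [hsre]; nlinarith)
    refine this.trans ?_
    rw [norm_mul, Complex.norm_real, Real.norm_of_nonneg hκ.le]
    gcongr
  have h3 := hM s hsre.ge (by linarith)
  have hG : ‖Gs lam κ s‖ ≤ (C * 3 * 4) * (t ^ (-1 + ε/4) * (t * lam) ^ ((1 - ε) / 2)) := by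
    unfold Gs N1
    rw [norm_mul, norm_div, norm_div, norm_mul, Complex.norm_real, Real.norm_of_nonneg hκ.le]
    have hsn : 0 < ‖s‖ := norm_pos_iff.mpr hs0
    calc ‖M1 s‖ / ‖s‖ * (‖cexp (s * lam) - 1‖ * ‖cexp (s * κ) - 1‖ / κ)
        ≤ (C * t ^ (-1 + ε/4)) / ‖s‖ * ((4 * (t * lam) ^ ((1 - ε) / 2)) * (3 * (‖s‖ * κ)) / κ) := by
          gcongr
      _ = _ := by field_simp
  have hpow : (t ^ (-1 + ε/4) * (t * lam) ^ ((1 - ε) / 2)) ^ 2 = lam ^ (1 - ε) * t ^ (-(1 + ε / 2)) := by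
    rw [Real.mul_rpow ht0.le hl.le, mul_pow, mul_pow, ← Real.rpow_mul_natCast ht0.le,
      ← Real.rpow_mul_natCast ht0.le, ← Real.rpow_mul_natCast hl.le, ← mul_assoc, ← Real.rpow_add ht0, mul_comm]
    congr 2 <;> push_cast <;> ring
  calc _ ≤ ((C * 3 * 4) * (t ^ (-1 + ε/4) * (t * lam) ^ ((1 - ε) / 2))) ^ 2 := by gcongr
    _ = (C * 3 * 4) ^ 2 * lam ^ (1 - ε) * t ^ (-(1 + ε / 2)) := by rw [mul_pow, hpow]; ring
    _ ≤ _ := by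
      gcongr ?_ * ?_
      apply Real.rpow_le_rpow_of_nonpos (by positivity) _ (by linarith)
      rw [ht, hs, vs_im, Real.norm_eq_abs, abs_mul, abs_of_pos (by positivity : 0 < 2 * π)]
      have := abs_nonneg ξ
      nlinarith [Real.pi_gt_three]

lemma KK_ae : ∀ᵐ u : ℝ, Tendsto (fun κ : ℝ => κ⁻¹ * (KK (u + κ) - KK u)) (𝓝[>] 0) (𝓝 (HH u)) := by
  filter_upwards [LocallyIntegrable.ae_hasDerivAt_integral HH_locInt] with u hu
  have h1 : HasDerivAt KK (HH u) u := by
    have : KK = fun u => KK 0 + ∫ t in (0:ℝ)..u, HH t := by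
      ext u; rw [← KK_sub]; ring
    rw [this]
    exact (hu 0).const_add _
  simpa using h1.tendsto_slope_zero_right

lemma var_log (hRH : RiemannHypothesis) {ε : ℝ} (hε : 0 < ε) (hε1 : ε ≤ 1/2) :
    ∃ C : ℝ, 0 < C ∧ ∀ lam : ℝ, 0 < lam → lam ≤ 1 →
      ∫⁻ u, ‖((HH (u + lam) - HH u : ℝ) : ℂ) * cexp (-((1/2 + ε : ℝ):ℂ) * u)‖ₑ ^ 2 ≤
        ENNReal.ofReal (C * lam ^ (1 - ε)) := by
  obtain ⟨C, hC, hG⟩ := Gs_bound hRH hε hε1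
  have hJi : Integrable (fun ξ : ℝ => (1 + ‖ξ‖) ^ (-(1 + ε / 2))) :=
    integrable_one_add_norm (by simp; linarith)
  set J := ∫ ξ : ℝ, (1 + ‖ξ‖) ^ (-(1 + ε / 2)) with hJ
  have hJ0 : 0 ≤ J := integral_nonneg (fun ξ => by positivity)
  refine ⟨C * (J + 1), by positivity, fun lam hl hl1 => ?_⟩
  set σ := 1/2 + ε with hσ
  set kn : ℕ → ℝ := fun n => 1 / ((n:ℝ) + 1) with hkn
  have hkn0 : ∀ n, 0 < kn n := fun n => by simp only [hkn]; positivity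
  have hkn1 : ∀ n, kn n ≤ 1 := fun n => by
    simp only [hkn]; rw [div_le_one (by positivity)]; linarith [(Nat.cast_nonneg n : (0:ℝ) ≤ n)]
  have hkt : Tendsto kn atTop (𝓝[>] 0) := by
    rw [tendsto_nhdsWithin_iff]
    exact ⟨tendsto_one_div_add_atTop_nhds_zero_nat, Eventually.of_forall fun n => hkn0 n⟩
  set F : ℕ → ℝ → ℂ := fun n u => (((kn n)⁻¹ * (KK (u + lam + kn n) - KK (u + lam)) -
    (kn n)⁻¹ * (KK (u + kn n) - KK u) : ℝ) : ℂ) * cexp (-σ * u) with hF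
  have hFb : ∀ n, ∫⁻ u, ‖F n u‖ₑ ^ 2 ≤ ENNReal.ofReal (C * (J + 1) * lam ^ (1 - ε)) := by
    intro n
    obtain ⟨hi, hr⟩ := Gs_repr hRH (σ := σ) (by linarith) (by linarith) hl hl1 (hkn0 n) (hkn1 n)
    have hsq : Integrable (fun ξ => ‖Gs lam (kn n) (vs σ ξ)‖ ^ 2) := by
      refine (hJi.const_mul (C * lam ^ (1 - ε))).mono' (hi.aestronglyMeasurable.norm.pow 2) ?_
      filter_upwards with ξ
      rw [Real.norm_of_nonneg (by positivity)]
      exact hG lam (kn n) hl hl1 (hkn0 n) (hkn1 n) ξ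
    have hm : MemLp (fun ξ => Gs lam (kn n) (vs σ ξ)) 2 :=
      (memLp_two_iff_integrable_sq_norm hi.aestronglyMeasurable).mpr hsq
    have hp := plancherel _ hi hm
    simp only [hr] at hp
    have e1 : ∫⁻ u, ‖F n u‖ₑ ^ 2 = ∫⁻ ξ, ‖Gs lam (kn n) (vs σ ξ)‖ₑ ^ 2 := hp
    rw [e1]
    have e2 : ∀ ξ, ‖Gs lam (kn n) (vs σ ξ)‖ₑ ^ 2 = ENNReal.ofReal (‖Gs lam (kn n) (vs σ ξ)‖ ^ 2) := by
      intro ξ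
      rw [ENNReal.ofReal_pow (norm_nonneg _), ofReal_norm]
    simp only [e2]
    rw [← ofReal_integral_eq_lintegral_ofReal hsq (ae_of_all _ fun ξ => by positivity)]
    apply ENNReal.ofReal_le_ofReal
    calc _ ≤ ∫ ξ : ℝ, C * lam ^ (1 - ε) * (1 + ‖ξ‖) ^ (-(1 + ε / 2)) :=
          integral_mono hsq (hJi.const_mul _) (fun ξ => hG lam (kn n) hl hl1 (hkn0 n) (hkn1 n) ξ)
      _ = C * lam ^ (1 - ε) * J := by rw [integral_const_mul]
      _ ≤ C * lam ^ (1 - ε) * (J + 1) := by gcongr; linarith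
      _ = _ := by ring
  have hFm : ∀ n, Measurable (fun u => ‖F n u‖ₑ ^ 2) := by
    intro n
    have hc := KK_cont
    apply Measurable.pow_const
    apply Measurable.enorm
    apply Continuous.measurable
    simp only [hF]
    fun_prop
  have hKl : ∀ᵐ u : ℝ, Tendsto (fun κ : ℝ => κ⁻¹ * (KK (u + lam + κ) - KK (u + lam))) (𝓝[>] 0) (𝓝 (HH (u + lam))) :=
    (measurePreserving_add_right volume lam).quasiMeasurePreserving.ae KK_ae
  have hlim : ∀ᵐ u : ℝ, ‖((HH (u + lam) - HH u : ℝ) : ℂ) * cexp (-((σ : ℝ):ℂ) * u)‖ₑ ^ 2 =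
      liminf (fun n => ‖F n u‖ₑ ^ 2) atTop := by
    filter_upwards [KK_ae, hKl] with u h1 h2
    symm
    apply Tendsto.liminf_eq
    have h3 := (h2.comp hkt).sub (h1.comp hkt)
    have h4 := ((Complex.continuous_ofReal.tendsto _).comp h3).mul_const (cexp (-σ * u))
    exact ((ENNReal.continuous_pow 2).tendsto _).comp ((continuous_enorm.tendsto _).comp h4)
  rw [lintegral_congr_ae hlim]
  refine (lintegral_liminf_le hFm).trans ?_
  exact liminf_le_of_le (by isBoundedDefault) (fun b hb => by
    obtain ⟨n, hn⟩ := hb.exists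
    exact hn.trans (hFb n))
end D1

namespace D1
open Set Filter Topology

noncomputable def Ff (x h : ℝ) : ℝ := Chebyshev.psi (x + h) - Chebyshev.psi x - h

lemma Ff_meas : Measurable (fun p : ℝ × ℝ => Ff p.1 p.2) := by
  unfold Ff
  have := Chebyshev.psi_mono.measurable
  fun_prop

lemma exp_image_Ioc {X : ℝ} (hX : 1 ≤ X) : Real.exp '' Ioc 0 (Real.log X) = Ioc 1 X := by
  have hX0 : 0 < X := by linarith
  ext x; constructor
  · rintro ⟨u, hu, rfl⟩
    refine ⟨by simpa using hu.1, ?_⟩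
    rw [← Real.le_log_iff_exp_le hX0]; exact hu.2
  · intro hx
    have : (0:ℝ) < x := lt_trans one_pos hx.1
    exact ⟨Real.log x, ⟨Real.log_pos hx.1, Real.log_le_log this hx.2⟩, Real.exp_log this⟩

lemma var_bound (hRH : RiemannHypothesis) {ε : ℝ} (hε : 0 < ε) (hε1 : ε ≤ 1/2) :
    ∃ C : ℝ, 0 < C ∧ ∀ X θ : ℝ, 1 ≤ X → 0 < θ → θ ≤ 1 →
      ∫ x in (1:ℝ)..X, (Ff x (θ * x)) ^ 2 ≤ C * X ^ (2 + 2 * ε) * θ ^ (1 - ε) := by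
  obtain ⟨C, hC, h⟩ := var_log hRH hε hε1
  refine ⟨C, hC, fun X θ hX hθ hθ1 => ?_⟩
  have hX0 : 0 < X := by linarith
  set lam := Real.log (1 + θ) with hlam
  have hl0 : 0 < lam := Real.log_pos (by linarith)
  have hlθ : lam ≤ θ := by
    have := Real.log_le_sub_one_of_pos (show 0 < 1 + θ by linarith)
    linarith
  have hb := h lam hl0 (hlθ.trans hθ1)
  rw [intervalIntegral.integral_of_le hX]
  have hm : Measurable (fun x : ℝ => (Ff x (θ * x)) ^ 2) :=
    (Ff_meas.comp (by fun_prop : Measurable (fun x : ℝ => (x, θ * x)))).pow_const 2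
  rw [integral_eq_lintegral_of_nonneg_ae (ae_of_all _ fun x => sq_nonneg _) hm.aestronglyMeasurable]
  apply ENNReal.toReal_le_of_le_ofReal (by positivity)
  rw [← exp_image_Ioc hX, lintegral_image_eq_lintegral_abs_deriv_mul measurableSet_Ioc
    (fun x _ => (Real.hasDerivAt_exp x).hasDerivWithinAt) Real.exp_injective.injOn]
  calc _ ≤ ∫⁻ u in Ioc 0 (Real.log X), ENNReal.ofReal (X ^ (2 + 2 * ε)) *
        ‖((HH (u + lam) - HH u : ℝ) : ℂ) * Complex.exp (-((1/2 + ε : ℝ):ℂ) * u)‖ₑ ^ 2 := by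
        apply setLIntegral_mono' measurableSet_Ioc
        intro u hu
        rw [← ofReal_norm, ← ENNReal.ofReal_pow (norm_nonneg _), ← ENNReal.ofReal_mul (abs_nonneg _),
          ← ENNReal.ofReal_mul (by positivity)]
        apply ENNReal.ofReal_le_ofReal
        have e1 : HH (u + lam) - HH u = Ff (Real.exp u) (θ * Real.exp u) := by
          unfold HH Ff
          rw [indicator_of_mem (show u + lam ∈ Ioi (0:ℝ) by simp; linarith [hu.1]),
            indicator_of_mem (show u ∈ Ioi (0:ℝ) from hu.1), Real.exp_add, hlam,
            Real.exp_log (by linarith)]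
          ring_nf
        rw [e1, norm_mul, Complex.norm_exp, Complex.norm_real, mul_pow, Real.norm_eq_abs, sq_abs,
          abs_of_pos (Real.exp_pos u), mul_comm, mul_left_comm]
        gcongr
        have e2 : (-((1/2 + ε : ℝ):ℂ) * u).re = -(1/2 + ε) * u := by simp
        rw [e2, ← Real.exp_nat_mul]
        have e3 : Real.exp u = Real.exp ((2 + 2 * ε) * u) * Real.exp ((2:ℕ) * (-(1/2 + ε) * u)) := by
          rw [← Real.exp_add]; congr 1; push_cast; ring
        rw [e3]
        gcongr
        rw [Real.rpow_def_of_pos hX0, mul_comm]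
        apply Real.exp_le_exp.mpr
        have := hu.2
        gcongr
    _ ≤ ENNReal.ofReal (X ^ (2 + 2 * ε)) * ∫⁻ u, 
        ‖((HH (u + lam) - HH u : ℝ) : ℂ) * Complex.exp (-((1/2 + ε : ℝ):ℂ) * u)‖ₑ ^ 2 := by
        rw [lintegral_const_mul' _ _ ENNReal.ofReal_ne_top]
        gcongr
        exact Measure.restrict_le_self
    _ ≤ ENNReal.ofReal (X ^ (2 + 2 * ε)) * ENNReal.ofReal (C * lam ^ (1 - ε)) := by gcongr
    _ ≤ _ := by
        rw [← ENNReal.ofReal_mul (by positivity)]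
        apply ENNReal.ofReal_le_ofReal
        calc _ ≤ X ^ (2 + 2 * ε) * (C * θ ^ (1 - ε)) := by
              gcongr
              linarith
          _ = _ := by ring
end D1

namespace D1
open Set Filter Topology

lemma prod_int {A B : Set ℝ} (hA : MeasurableSet A) (hB : MeasurableSet B)
    (hA' : volume A < ⊤) (hB' : volume B < ⊤)
    {f : ℝ × ℝ → ℝ} (hf : Measurable f) {C : ℝ} (hC : ∀ x ∈ A, ∀ y ∈ B, |f (x, y)| ≤ C) :
    Integrable f ((volume.restrict A).prod (volume.restrict B)) := by
  rw [Measure.prod_restrict]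
  refine Measure.integrableOn_of_bounded (M := C) ?_ hf.aestronglyMeasurable ?_
  · rw [Measure.prod_prod]; exact (ENNReal.mul_lt_top hA' hB').ne
  · filter_upwards [ae_restrict_mem (hA.prod hB)] with p hp
    exact hC p.1 hp.1 p.2 hp.2

lemma avg_swap {q : ℝ → ℝ → ℝ} (hq : Measurable (fun p : ℝ × ℝ => q p.1 p.2))
    {X Y δ₁ δ E B : ℝ} (hY : 0 < Y) (hYX : Y ≤ X) (hδ₁ : 0 < δ₁) (hδ : δ₁ ≤ δ)
    (hB : ∀ x h, Y ≤ x → x ≤ X → δ₁ * Y ≤ h → h ≤ δ * X → |q x h| ≤ B)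
    (hE0 : 0 ≤ E)
    (hE : ∀ a b h, Y ≤ a → a ≤ b → b ≤ X → δ₁ * b ≤ h → h ≤ δ * a →
      |∫ x in a..b, q x h| ≤ E) :
    |∫ d in δ₁..δ, d⁻¹ * ∫ x in Y..X, q x (d * x)| ≤ E * Real.log (δ * X / (δ₁ * Y)) := by
  have hδ0 : 0 < δ := hδ₁.trans_le hδ
  have hX : 0 < X := hY.trans_le hYX
  have hB0 : 0 ≤ B := (abs_nonneg _).trans (hB Y (δ₁ * Y) le_rfl hYX le_rfl (by gcongr))
  have hYX' : δ₁ * Y ≤ δ * X := by gcongr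
  have fin : ∀ a b : ℝ, volume (Ioc a b) < ⊤ := fun a b => measure_Ioc_lt_top
  -- step A
  have hA : ∫ d in δ₁..δ, d⁻¹ * ∫ x in Y..X, q x (d * x) =
      ∫ x in Ioc Y X, ∫ d in Ioc δ₁ δ, d⁻¹ * q x (d * x) := by
    rw [intervalIntegral.integral_of_le hδ]
    simp only [intervalIntegral.integral_of_le hYX, ← integral_const_mul]
    apply integral_integral_swap (f := fun d x => d⁻¹ * q x (d * x))
    refine prod_int measurableSet_Ioc measurableSet_Ioc (fin _ _) (fin _ _) (C := δ₁⁻¹ * B) ?_ ?_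
    · exact measurable_fst.inv.mul (hq.comp (by fun_prop : Measurable (fun p : ℝ × ℝ => (p.2, p.1 * p.2))))
    · intro d hd x hx
      have hd0 : 0 < d := hδ₁.trans hd.1
      have hx0 : 0 < x := hY.trans hx.1
      simp only [Function.uncurry, abs_mul, abs_inv, abs_of_pos hd0]
      have h1 := hd.1.le
      have h2 := hd.2
      have h3 := hx.1.le
      have h4 := hx.2
      have := hB x (d * x) h3 h4 (by gcongr) (by gcongr)
      gcongr
  set S : ℝ → Set ℝ := fun x => Ico (δ₁ * x) (δ * x) with hS
  -- step B
  have hBx : ∀ x ∈ Ioc Y X, ∫ d in Ioc δ₁ δ, d⁻¹ * q x (d * x) =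
      ∫ h in Ioc (δ₁ * Y) (δ * X), (S x).indicator (fun h => h⁻¹ * q x h) h := by
    intro x hx
    have hx0 : 0 < x := hY.trans hx.1
    have h1 : ∫ d in Ioc δ₁ δ, d⁻¹ * q x (d * x) = ∫ d in δ₁..δ, x * ((d * x)⁻¹ * q x (d * x)) := by
      rw [intervalIntegral.integral_of_le hδ]
      congr 1; ext d
      rw [mul_inv]; field_simp
    rw [h1, intervalIntegral.integral_const_mul,
      intervalIntegral.integral_comp_mul_right (fun h => h⁻¹ * q x h) hx0.ne', smul_eq_mul,
      mul_inv_cancel_left₀ hx0.ne', intervalIntegral.integral_of_le (by gcongr),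
      ← integral_Ico_eq_integral_Ioc, integral_indicator measurableSet_Ico,
      Measure.restrict_restrict measurableSet_Ico]
    congr 2
    symm
    rw [inter_eq_left]
    intro h hh
    refine ⟨lt_of_lt_of_le ?_ hh.1, hh.2.le.trans ?_⟩
    · have := hx.1; gcongr
    · have := hx.2; gcongr
  rw [hA, setIntegral_congr_fun measurableSet_Ioc hBx]
  -- step C
  have hmS : MeasurableSet {p : ℝ × ℝ | δ₁ * p.1 ≤ p.2 ∧ p.2 < δ * p.1} := by
    have m1 : MeasurableSet {p : ℝ × ℝ | δ₁ * p.1 ≤ p.2} := measurableSet_le (by fun_prop) (by fun_prop)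
    have m2 : MeasurableSet {p : ℝ × ℝ | p.2 < δ * p.1} := measurableSet_lt (by fun_prop) (by fun_prop)
    exact m1.inter m2
  have hC : ∫ x in Ioc Y X, ∫ h in Ioc (δ₁ * Y) (δ * X), (S x).indicator (fun h => h⁻¹ * q x h) h =
      ∫ h in Ioc (δ₁ * Y) (δ * X), ∫ x in Ioc Y X, (S x).indicator (fun h => h⁻¹ * q x h) h := by
    apply integral_integral_swap (f := fun x h => (S x).indicator (fun h => h⁻¹ * q x h) h)
    have he : Function.uncurry (fun x h => (S x).indicator (fun h => h⁻¹ * q x h) h) =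
        {p : ℝ × ℝ | δ₁ * p.1 ≤ p.2 ∧ p.2 < δ * p.1}.indicator (fun p => p.2⁻¹ * q p.1 p.2) := by
      ext ⟨x, h⟩
      simp only [Function.uncurry, indicator, hS, mem_Ico, mem_ofPred_eq]
    refine prod_int measurableSet_Ioc measurableSet_Ioc (fin _ _) (fin _ _) (C := (δ₁ * Y)⁻¹ * B) ?_ ?_
    · rw [he]
      exact Measurable.indicator (measurable_snd.inv.mul hq) hmS
    · intro x hx h hh
      have hh0 : 0 < h := lt_trans (by positivity) hh.1
      simp only [Function.uncurry]
      refine (norm_indicator_le_norm_self (fun h => h⁻¹ * q x h) h).trans ?_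
      rw [Real.norm_eq_abs, abs_mul, abs_inv, abs_of_pos hh0]
      have := hB x h hx.1.le hx.2 hh.1.le hh.2
      have h1 := hh.1.le
      gcongr
  rw [hC]
  -- step D
  have hD : ∀ h ∈ Ioc (δ₁ * Y) (δ * X),
      |∫ x in Ioc Y X, (S x).indicator (fun h => h⁻¹ * q x h) h| ≤ E * h⁻¹ := by
    intro h hh
    have hh0 : 0 < h := lt_trans (by positivity) hh.1
    have e1 : ∀ x : ℝ, (S x).indicator (fun h => h⁻¹ * q x h) h =
        (Ioc (h / δ) (h / δ₁)).indicator (fun x => h⁻¹ * q x h) x := by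
      intro x
      simp only [indicator, hS, mem_Ico, mem_Ioc]
      congr 1
      rw [div_lt_iff₀ hδ0, le_div_iff₀ hδ₁, mul_comm x, mul_comm x]
      exact propext and_comm
    simp only [e1]
    rw [integral_indicator measurableSet_Ioc, Measure.restrict_restrict measurableSet_Ioc,
      Ioc_inter_Ioc, integral_const_mul, abs_mul, abs_inv, abs_of_pos hh0, mul_comm]
    gcongr
    set a := max (h / δ) Y with ha
    set b := min (h / δ₁) X with hb
    have ha' : h / δ ⊔ Y = a := rfl
    have hb' : h / δ₁ ⊓ X = b := rfl
    rcases le_or_gt a b with hab | hab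
    · rw [← intervalIntegral.integral_of_le hab]
      apply hE a b h (le_max_right _ _) hab (min_le_right _ _)
      · have : b ≤ h / δ₁ := min_le_left _ _
        rw [le_div_iff₀ hδ₁] at this; linarith
      · have : h / δ ≤ a := le_max_left _ _
        rw [div_le_iff₀ hδ0] at this; linarith
    · rw [Ioc_eq_empty (by linarith)]; simpa using hE0
  have h0 : (0:ℝ) ∉ uIcc (δ₁ * Y) (δ * X) := by
    rw [uIcc_of_le hYX']; intro h; have := h.1; have : 0 < δ₁ * Y := by positivity
    linarith
  have hI : IntegrableOn (fun h : ℝ => E * h⁻¹) (Ioc (δ₁ * Y) (δ * X)) := by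
    have : IntervalIntegrable (fun h : ℝ => E * h⁻¹) volume (δ₁ * Y) (δ * X) :=
      (intervalIntegral.intervalIntegrable_inv (fun x hx h => h0 (h ▸ hx)) continuousOn_id).const_mul E
    exact (intervalIntegrable_iff_integrableOn_Ioc_of_le hYX').mp this
  have := norm_integral_le_of_norm_le hI (f := fun h => ∫ x in Ioc Y X, (S x).indicator (fun h => h⁻¹ * q x h) h)
    (by filter_upwards [ae_restrict_mem measurableSet_Ioc] with h hh; exact hD h hh)
  rw [Real.norm_eq_abs] at this
  refine this.trans ?_
  rw [← intervalIntegral.integral_of_le hYX', intervalIntegral.integral_const_mul, integral_inv h0]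
end D1

namespace D1
open Set Filter Topology

lemma Ff_bdd {x h M : ℝ} (hx : 0 ≤ x) (hxM : x ≤ M) (hh : 0 ≤ h) (hhM : h ≤ M) :
    |Ff x h| ≤ Chebyshev.psi (2 * M) + M := by
  unfold Ff
  have h1 : Chebyshev.psi x ≤ Chebyshev.psi (x + h) := Chebyshev.psi_mono (by linarith)
  have h2 : Chebyshev.psi (x + h) ≤ Chebyshev.psi (2 * M) := Chebyshev.psi_mono (by linarith)
  have h3 := Chebyshev.psi_nonneg x
  rw [abs_le]; constructor <;> linarith

lemma Ff_ii {g : ℝ → ℝ} (hg : Measurable g) {a b M : ℝ} (ha : 0 ≤ a) (hab : a ≤ b) (hbM : b ≤ M)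
    (h0 : ∀ x, a ≤ x → x ≤ b → 0 ≤ g x ∧ g x ≤ M) :
    IntervalIntegrable (fun x => (Ff x (g x)) ^ 2) volume a b := by
  rw [intervalIntegrable_iff_integrableOn_Ioc_of_le hab]
  refine Measure.integrableOn_of_bounded (M := (Chebyshev.psi (2 * M) + M) ^ 2)
    measure_Ioc_lt_top.ne ?_ ?_
  · exact ((Ff_meas.comp (measurable_id.prodMk hg)).pow_const 2).aestronglyMeasurable
  · filter_upwards [ae_restrict_mem measurableSet_Ioc] with x hx
    obtain ⟨h1, h2⟩ := h0 x hx.1.le hx.2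
    have := Ff_bdd (ha.trans hx.1.le) (hx.2.trans hbM) h1 h2
    rw [norm_pow, Real.norm_eq_abs]
    gcongr

noncomputable def mm (K x h : ℝ) : ℝ := h * (Real.log (x / h) - K + 1)

lemma mm_deriv {K x h : ℝ} (hx : 0 < x) (hh : 0 < h) :
    HasDerivAt (fun x => h * x * (Real.log (x / h) - K)) (mm K x h) x := by
  have h1 : HasDerivAt (fun x : ℝ => Real.log (x / h) - K) (1 / h / (x / h)) x :=
    (((hasDerivAt_id x).div_const h).log (by positivity)).sub_const K
  have h2 : HasDerivAt (fun x : ℝ => h * x) (h * 1) x := (hasDerivAt_id x).const_mul h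
  refine (h2.mul h1).congr_deriv ?_
  unfold mm; field_simp

lemma mm_ii {K a b h : ℝ} (ha : 0 < a) (hab : a ≤ b) (hh : 0 < h) :
    IntervalIntegrable (fun x => mm K x h) volume a b := by
  apply ContinuousOn.intervalIntegrable
  rw [uIcc_of_le hab]
  unfold mm
  have : ∀ x ∈ Icc a b, x / h ≠ 0 := fun x hx => by
    have := ha.trans_le hx.1
    positivity
  have h2 : ContinuousOn (fun x : ℝ => Real.log (x / h)) (Icc a b) :=
    ContinuousOn.log (by fun_prop) this
  fun_prop

lemma E_bound {K D c a b h : ℝ} (ha : 1 ≤ a) (hab : a ≤ b) (hh : 0 < h)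
    (Ha : |(∫ x in (1:ℝ)..a, (Ff x h)^2) - h * a * (Real.log (a / h) - K)| ≤ D * h * a ^ (1 - c))
    (Hb : |(∫ x in (1:ℝ)..b, (Ff x h)^2) - h * b * (Real.log (b / h) - K)| ≤ D * h * b ^ (1 - c)) :
    |∫ x in a..b, ((Ff x h)^2 - mm K x h)| ≤ D * h * a ^ (1 - c) + D * h * b ^ (1 - c) := by
  have ha0 : 0 < a := by linarith
  have i1 : IntervalIntegrable (fun x => (Ff x h)^2) volume a b :=
    Ff_ii (g := fun _ => h) measurable_const (M := b + h) ha0.le hab (by linarith)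
      (fun _ _ _ => ⟨hh.le, by linarith⟩)
  have i0 : IntervalIntegrable (fun x => (Ff x h)^2) volume 1 a :=
    Ff_ii (g := fun _ => h) measurable_const (M := a + h) zero_le_one ha (by linarith)
      (fun _ _ _ => ⟨hh.le, by linarith⟩)
  have e1 : ∫ x in a..b, mm K x h = h * b * (Real.log (b / h) - K) - h * a * (Real.log (a / h) - K) := by
    apply intervalIntegral.integral_eq_sub_of_hasDerivAt (f := fun x => h * x * (Real.log (x / h) - K))
    · intro x hx
      rw [uIcc_of_le hab] at hx
      exact mm_deriv (ha0.trans_le hx.1) hh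
    · exact mm_ii ha0 hab hh
  rw [intervalIntegral.integral_sub i1 (mm_ii ha0 hab hh), e1]
  rw [← intervalIntegral.integral_add_adjacent_intervals i0 i1] at Hb
  rw [abs_le] at *
  constructor <;> linarith [Ha.1, Ha.2, Hb.1, Hb.2]

lemma N_eval {K d X Y : ℝ} (hY : 0 < Y) (hYX : Y ≤ X) :
    ∫ x in Y..X, mm K x (d * x) = 1 / 2 * d * (X ^ 2 - Y ^ 2) * (Real.log (1 / d) + 1 - K) := by
  have : ∫ x in Y..X, mm K x (d * x) = ∫ x in Y..X, (d * (Real.log (1 / d) + 1 - K)) * x := by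
    apply intervalIntegral.integral_congr
    intro x hx
    rw [uIcc_of_le hYX] at hx
    have hx0 : x ≠ 0 := (hY.trans_le hx.1).ne'
    have : x / (d * x) = 1 / d := by
      rw [div_mul_eq_div_div_swap, div_self hx0]
    simp only [mm, this]; ring
  rw [this, intervalIntegral.integral_const_mul, integral_id]; ring

lemma combine {G : ℝ → ℝ} (hG : Measurable G) {δ η A S : ℝ} (hδ : 0 < δ) (hη : 0 < η) (hη1 : η ≤ 1 / 2)
    (hA : |∫ d in ((1 - η) * δ)..δ, d⁻¹ * G d| ≤ A)
    (hS : ∀ d, (1 - η) * δ ≤ d → d ≤ δ → |G d - G δ| ≤ S) : |G δ| ≤ A / η + S := by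
  have hδ₁ : 0 < (1 - η) * δ := mul_pos (by linarith) hδ
  have hle : (1 - η) * δ ≤ δ := by nlinarith
  have hinv : IntervalIntegrable (fun d : ℝ => d⁻¹) volume ((1 - η) * δ) δ := by
    apply intervalIntegral.intervalIntegrable_inv
    · intro x hx
      rw [uIcc_of_le hle] at hx
      exact (hδ₁.trans_le hx.1).ne'
    · exact continuousOn_id
  have hL : ∫ d in ((1 - η) * δ)..δ, d⁻¹ = Real.log (1 / (1 - η)) := by
    rw [integral_inv_of_pos hδ₁ hδ]
    congr 1; field_simp
  have hLη : η ≤ Real.log (1 / (1 - η)) := by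
    rw [one_div, Real.log_inv]
    have := Real.log_le_sub_one_of_pos (show 0 < 1 - η by linarith)
    linarith
  have hdiff : IntervalIntegrable (fun d : ℝ => d⁻¹ * (G d - G δ)) volume ((1 - η) * δ) δ := by
    rw [intervalIntegrable_iff_integrableOn_Ioc_of_le hle]
    refine Measure.integrableOn_of_bounded (M := ((1 - η) * δ)⁻¹ * S) measure_Ioc_lt_top.ne ?_ ?_
    · exact (measurable_id.inv.mul (hG.sub_const _)).aestronglyMeasurable
    · filter_upwards [ae_restrict_mem measurableSet_Ioc] with x hx
      rw [norm_mul, norm_inv, Real.norm_eq_abs, Real.norm_eq_abs, abs_of_pos (hδ₁.trans hx.1)]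
      have := hx.1.le
      have := hS x hx.1.le hx.2
      gcongr
  have hsplit : ∫ d in ((1 - η) * δ)..δ, d⁻¹ * G d =
      (∫ d in ((1 - η) * δ)..δ, d⁻¹ * (G d - G δ)) + Real.log (1 / (1 - η)) * G δ := by
    rw [← hL, ← intervalIntegral.integral_mul_const, ← intervalIntegral.integral_add hdiff (hinv.mul_const _)]
    congr 1; ext d; ring
  have hb : |∫ d in ((1 - η) * δ)..δ, d⁻¹ * (G d - G δ)| ≤ Real.log (1 / (1 - η)) * S := by
    rw [← hL, ← intervalIntegral.integral_mul_const, ← Real.norm_eq_abs]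
    apply intervalIntegral.norm_integral_le_of_norm_le hle _ (hinv.mul_const _)
    refine ae_of_all _ fun d hd => ?_
    have hd0 := hδ₁.trans hd.1
    rw [norm_mul, norm_inv, Real.norm_eq_abs, Real.norm_eq_abs, abs_of_pos hd0]
    have := hS d hd.1.le hd.2
    gcongr
  set l := Real.log (1 / (1 - η))
  have hl0 : 0 < l := hη.trans_le hLη
  have hA0 : 0 ≤ A := (abs_nonneg _).trans hA
  have h3 : l * |G δ| ≤ A + l * S := by
    have : l * |G δ| = |l * G δ| := by rw [abs_mul, abs_of_pos hl0]
    rw [this, show l * G δ = (∫ d in ((1 - η) * δ)..δ, d⁻¹ * G d) -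
      ∫ d in ((1 - η) * δ)..δ, d⁻¹ * (G d - G δ) by rw [hsplit]; ring]
    exact (abs_sub _ _).trans (add_le_add hA hb)
  have h4 : |G δ| ≤ A / l + S := by
    rw [← sub_le_iff_le_add, le_div_iff₀ hl0]; nlinarith
  have h5 : A / l ≤ A / η := by gcongr
  linarith
end D1

namespace D1
open Set Filter Topology

lemma Q_lip {C ε : ℝ} (hC : 0 < C) (hε : 0 < ε) (hε1 : ε ≤ 1/2)
    (hvb : ∀ X θ : ℝ, 1 ≤ X → 0 < θ → θ ≤ 1 →
      ∫ x in (1:ℝ)..X, (Ff x (θ * x)) ^ 2 ≤ C * X ^ (2 + 2 * ε) * θ ^ (1 - ε))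
    {X Y δ η d : ℝ} (hY : 1 ≤ Y) (hYX : Y ≤ X) (hδ : 0 < δ) (hδ1 : δ ≤ 1) (hη : 0 < η)
    (hη1 : η ≤ 1/2) (hd : (1 - η) * δ ≤ d) (hdδ : d ≤ δ) :
    |(∫ x in Y..X, (Ff x (d * x)) ^ 2) - ∫ x in Y..X, (Ff x (δ * x)) ^ 2| ≤
      17 * C * X ^ (2 + 2 * ε) * δ ^ (1 - ε) * η ^ ((1 - ε) / 2) := by
  have hX : 1 ≤ X := hY.trans hYX
  have hX0 : 0 < X := by linarith
  have hY0 : 0 < Y := by linarith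
  rcases hdδ.eq_or_lt with rfl | hlt
  · simp; positivity
  have hd0 : 0 < d := lt_of_lt_of_le (mul_pos (by linarith) hδ) hd
  set θ := (δ - d) / (1 + d) with hθ
  have hθ0 : 0 < θ := div_pos (by linarith) (by linarith)
  have hθη : θ ≤ η * δ := by
    rw [hθ, div_le_iff₀ (by linarith)]; nlinarith [mul_pos hη hδ]
  have hθ1 : θ ≤ 1 := by nlinarith
  have hθe : θ * (1 + d) = δ - d := by rw [hθ]; field_simp
  set τ := η ^ ((1 - ε) / 2) with hτ
  have hτ0 : 0 < τ := by positivity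
  have hτ1 : τ ≤ 1 := Real.rpow_le_one hη.le (by linarith) (by linarith)
  have hτ2 : τ * τ = η ^ (1 - ε) := by rw [hτ, ← Real.rpow_add hη]; ring_nf
  have id : ∀ s : ℝ, 0 ≤ s → s ≤ 1 → ∀ a b : ℝ, 0 ≤ a → a ≤ b →
      IntervalIntegrable (fun x => (Ff x (s * x)) ^ 2) volume a b := fun s hs hs1 a b ha hab =>
    Ff_ii (g := fun x => s * x) (by fun_prop) (M := b) ha hab le_rfl
      (fun x hx hxb => ⟨mul_nonneg hs (ha.trans hx), by nlinarith⟩)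
  have i1 := id d hd0.le (by linarith) Y X hY0.le hYX
  have i2 := id δ hδ.le hδ1 Y X hY0.le hYX
  have i3 : IntervalIntegrable (fun x => (Ff (x * (1 + d)) (θ * (x * (1 + d)))) ^ 2) volume Y X := by
    have := (id θ hθ0.le hθ1 (Y * (1 + d)) (X * (1 + d)) (by positivity) (by gcongr)).comp_mul_right
      (c := 1 + d)
    rw [mul_div_cancel_right₀ _ (by linarith : 1 + d ≠ 0), mul_div_cancel_right₀ _ (by linarith : 1 + d ≠ 0)] at this
    exact this
  have key : ∀ x, Ff x (d * x) = Ff x (δ * x) - Ff (x * (1 + d)) (θ * (x * (1 + d))) := by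
    intro x
    have e : θ * (x * (1 + d)) = (δ - d) * x := by rw [← hθe]; ring
    rw [e]
    unfold Ff
    rw [show x * (1 + d) + (δ - d) * x = x + δ * x by ring, show x * (1 + d) = x + d * x by ring]
    ring
  have a1 : ∫ x in Y..X, (Ff x (δ * x)) ^ 2 ≤ C * X ^ (2 + 2 * ε) * δ ^ (1 - ε) := by
    refine le_trans ?_ (hvb X δ hX hδ hδ1)
    exact intervalIntegral.integral_mono_interval hY hYX le_rfl (ae_of_all _ fun x => sq_nonneg _)
      (id δ hδ.le hδ1 1 X zero_le_one hX)
  have a2 : ∫ x in Y..X, (Ff (x * (1 + d)) (θ * (x * (1 + d)))) ^ 2 ≤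
      8 * (C * X ^ (2 + 2 * ε) * δ ^ (1 - ε) * (τ * τ)) := by
    have h1 : ∫ x in (Y * (1 + d))..(X * (1 + d)), (Ff x (θ * x)) ^ 2 ≤
        ∫ x in (1:ℝ)..(2 * X), (Ff x (θ * x)) ^ 2 :=
      intervalIntegral.integral_mono_interval (by nlinarith) (by gcongr) (by nlinarith)
        (ae_of_all _ fun x => sq_nonneg _) (id θ hθ0.le hθ1 1 (2 * X) zero_le_one (by linarith))
    have h2 := hvb (2 * X) θ (by linarith) hθ0 hθ1
    rw [intervalIntegral.integral_comp_mul_right (fun x => (Ff x (θ * x)) ^ 2) (by linarith : 1 + d ≠ 0),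
      smul_eq_mul]
    have h3 : 0 ≤ ∫ x in (1:ℝ)..(2 * X), (Ff x (θ * x)) ^ 2 :=
      intervalIntegral.integral_nonneg (by linarith) fun x _ => sq_nonneg _
    have h4 : (1 + d)⁻¹ ≤ 1 := inv_le_one_of_one_le₀ (by linarith)
    have h5 : (2 * X) ^ (2 + 2 * ε) ≤ 8 * X ^ (2 + 2 * ε) := by
      rw [Real.mul_rpow (by norm_num) hX0.le]
      gcongr
      calc (2:ℝ) ^ (2 + 2 * ε) ≤ 2 ^ (3:ℝ) := by
            apply Real.rpow_le_rpow_of_exponent_le <;> linarith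
        _ = 8 := by norm_num
    have h6 : θ ^ (1 - ε) ≤ δ ^ (1 - ε) * (τ * τ) := by
      rw [hτ2, mul_comm, ← Real.mul_rpow hη.le hδ.le]
      exact Real.rpow_le_rpow hθ0.le hθη (by linarith)
    calc _ ≤ (1 + d)⁻¹ * ∫ x in (1:ℝ)..(2 * X), (Ff x (θ * x)) ^ 2 := by gcongr
      _ ≤ ∫ x in (1:ℝ)..(2 * X), (Ff x (θ * x)) ^ 2 := mul_le_of_le_one_left h3 h4
      _ ≤ _ := h2
      _ ≤ C * (8 * X ^ (2 + 2 * ε)) * (δ ^ (1 - ε) * (τ * τ)) := by gcongr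
      _ = _ := by ring
  rw [← intervalIntegral.integral_sub i1 i2]
  set T := C * X ^ (2 + 2 * ε) * δ ^ (1 - ε) with hT
  calc _ ≤ ∫ x in Y..X, (τ * (Ff x (δ * x)) ^ 2 + 2 / τ * (Ff (x * (1 + d)) (θ * (x * (1 + d)))) ^ 2) := by
        rw [← Real.norm_eq_abs]
        apply intervalIntegral.norm_integral_le_of_norm_le hYX _ ((i2.const_mul τ).add (i3.const_mul (2/τ)))
        refine ae_of_all _ fun x _ => ?_
        rw [key x, Real.norm_eq_abs]
        generalize Ff x (δ * x) = a
        generalize Ff (x * (1 + d)) (θ * (x * (1 + d))) = b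
        have h1 : 1 ≤ 1 / τ := by rw [le_div_iff₀ hτ0]; linarith
        have h2 : 2 * |a * b| ≤ τ * a ^ 2 + 1 / τ * b ^ 2 := by
          have : τ * a ^ 2 + 1 / τ * b ^ 2 - 2 * |a * b| = τ * (|a| - |b| / τ) ^ 2 := by
            rw [abs_mul, ← sq_abs a, ← sq_abs b]; field_simp; ring
          have : 0 ≤ τ * (|a| - |b| / τ) ^ 2 := by positivity
          linarith
        have h3 : b ^ 2 ≤ 1 / τ * b ^ 2 := le_mul_of_one_le_left (sq_nonneg b) h1
        have h4 : 2 / τ * b ^ 2 = 1 / τ * b ^ 2 + 1 / τ * b ^ 2 := by ring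
        have h5 := le_abs_self (a * b)
        have h6 := neg_abs_le (a * b)
        rw [abs_le]; constructor <;> nlinarith [sq_nonneg b]
    _ = τ * (∫ x in Y..X, (Ff x (δ * x)) ^ 2) +
        2 / τ * ∫ x in Y..X, (Ff (x * (1 + d)) (θ * (x * (1 + d)))) ^ 2 := by
        rw [intervalIntegral.integral_add (i2.const_mul τ) (i3.const_mul (2/τ)),
          intervalIntegral.integral_const_mul, intervalIntegral.integral_const_mul]
    _ ≤ τ * T + 2 / τ * (8 * (T * (τ * τ))) := by gcongr
    _ = _ := by rw [hT]; field_simp; ring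

lemma N_lip {κ X Y δ η d : ℝ} (hY : 1 ≤ Y) (hYX : Y ≤ X) (hδ : 0 < δ) (hδ1 : δ ≤ 1) (hη : 0 < η)
    (hη1 : η ≤ 1/2) (hd : (1 - η) * δ ≤ d) (hdδ : d ≤ δ) :
    |1 / 2 * d * (X ^ 2 - Y ^ 2) * (Real.log (1 / d) + κ) -
      1 / 2 * δ * (X ^ 2 - Y ^ 2) * (Real.log (1 / δ) + κ)| ≤
      X ^ 2 * η * δ * (Real.log (1 / δ) + |κ| + 1) := by
  have hd0 : 0 < d := lt_of_lt_of_le (mul_pos (by linarith) hδ) hd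
  have hl : 0 ≤ Real.log (1 / δ) := Real.log_nonneg (by rw [le_div_iff₀ hδ]; linarith)
  have h1 : Real.log (δ / d) ≤ δ / d - 1 := Real.log_le_sub_one_of_pos (by positivity)
  have h2 : 0 ≤ Real.log (δ / d) := Real.log_nonneg (by rw [le_div_iff₀ hd0]; linarith)
  have h3 : Real.log (1 / d) = Real.log (1 / δ) + Real.log (δ / d) := by
    rw [← Real.log_mul (by positivity) (by positivity)]; congr 1; field_simp
  have h4 : d * Real.log (δ / d) ≤ δ - d := by
    calc _ ≤ d * (δ / d - 1) := by gcongr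
      _ = _ := by field_simp
  have h5 : 0 ≤ d * Real.log (δ / d) := by positivity
  have hXY : 0 ≤ X ^ 2 - Y ^ 2 := by nlinarith
  have e : 1 / 2 * d * (X ^ 2 - Y ^ 2) * (Real.log (1 / d) + κ) -
      1 / 2 * δ * (X ^ 2 - Y ^ 2) * (Real.log (1 / δ) + κ) =
      1 / 2 * (X ^ 2 - Y ^ 2) * (d * Real.log (δ / d) - (δ - d) * (Real.log (1 / δ) + κ)) := by
    rw [h3]; ring
  rw [e, abs_mul, abs_of_nonneg (by positivity)]
  have h6 : |d * Real.log (δ / d) - (δ - d) * (Real.log (1 / δ) + κ)| ≤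
      (η * δ) * (Real.log (1 / δ) + |κ| + 1) := by
    calc _ ≤ |d * Real.log (δ / d)| + |(δ - d) * (Real.log (1 / δ) + κ)| := abs_sub _ _
      _ ≤ (δ - d) + (δ - d) * (Real.log (1 / δ) + |κ|) := by
          rw [abs_of_nonneg h5, abs_mul, abs_of_nonneg (by linarith : 0 ≤ δ - d)]
          gcongr
          exact (abs_add_le _ _).trans (by rw [abs_of_nonneg hl])
      _ = (δ - d) * (Real.log (1 / δ) + |κ| + 1) := by ring
      _ ≤ _ := by gcongr; linarith
  calc _ ≤ 1 / 2 * (X ^ 2 - Y ^ 2) * ((η * δ) * (Real.log (1 / δ) + |κ| + 1)) := by gcongr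
    _ ≤ X ^ 2 * ((η * δ) * (Real.log (1 / δ) + |κ| + 1)) := by
        gcongr; nlinarith [sq_nonneg X, sq_nonneg Y]
    _ = _ := by ring

lemma core {C ε : ℝ} (hC : 0 < C) (hε : 0 < ε) (hε1 : ε ≤ 1/2)
    (hvb : ∀ X θ : ℝ, 1 ≤ X → 0 < θ → θ ≤ 1 →
      ∫ x in (1:ℝ)..X, (Ff x (θ * x)) ^ 2 ≤ C * X ^ (2 + 2 * ε) * θ ^ (1 - ε))
    {K D c X Y δ η : ℝ} (hD : 0 ≤ D) (hc : c ≤ 2)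
    (hY : 1 ≤ Y) (hYX : Y ≤ X) (hδ : 0 < δ) (hδ1 : δ ≤ 1) (hη : 0 < η) (hη1 : η ≤ 1/2)
    (hH : ∀ x h, Y ≤ x → x ≤ X → (1 - η) * δ * x ≤ h → h ≤ δ * x →
      |(∫ t in (1:ℝ)..x, (Ff t h)^2) - h * x * (Real.log (x / h) - K)| ≤ D * h * x ^ (1 - c)) :
    |(∫ x in Y..X, (Ff x (δ * x)) ^ 2) - 1 / 2 * δ * (X ^ 2 - Y ^ 2) * (Real.log (1 / δ) + (1 - K))| ≤
      2 * D * δ * X ^ (2 - c) * Real.log (2 * X) / η +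
      (17 * C * X ^ (2 + 2 * ε) * δ ^ (1 - ε) * η ^ ((1 - ε) / 2) +
        X ^ 2 * η * δ * (Real.log (1 / δ) + |1 - K| + 1)) := by
  have hX : 1 ≤ X := hY.trans hYX
  have hX0 : 0 < X := by linarith
  have hY0 : 0 < Y := by linarith
  have hδ₁ : 0 < (1 - η) * δ := mul_pos (by linarith) hδ
  have hle : (1 - η) * δ ≤ δ := by nlinarith
  set q : ℝ → ℝ → ℝ := fun x h => (Ff x h) ^ 2 - mm K x h with hqdef
  have hmm : Measurable (fun p : ℝ × ℝ => mm K p.1 p.2) := by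
    unfold mm
    exact measurable_snd.mul
      (((Real.measurable_log.comp (measurable_fst.div measurable_snd)).sub_const K).add_const 1)
  have hq : Measurable (fun p : ℝ × ℝ => q p.1 p.2) := (Ff_meas.pow_const 2).sub hmm
  obtain ⟨B0, hB0⟩ : ∃ B0, ∀ p ∈ Icc Y X ×ˢ Icc ((1 - η) * δ * Y) (δ * X), ‖mm K p.1 p.2‖ ≤ B0 := by
    apply (isCompact_Icc.prod isCompact_Icc).exists_bound_of_continuousOn
    unfold mm
    have h2 : ∀ p ∈ Icc Y X ×ˢ Icc ((1 - η) * δ * Y) (δ * X), p.2 ≠ 0 := fun p hp =>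
      (lt_of_lt_of_le (by positivity) hp.2.1).ne'
    have h1 : ∀ p ∈ Icc Y X ×ˢ Icc ((1 - η) * δ * Y) (δ * X), p.1 / p.2 ≠ 0 := fun p hp =>
      div_ne_zero (hY0.trans_le hp.1.1).ne' (h2 p hp)
    exact continuousOn_snd.mul (((ContinuousOn.log (continuousOn_fst.div continuousOn_snd h2) h1).sub
      continuousOn_const).add continuousOn_const)
  have hG0 : ∀ d, (1 - η) * δ ≤ d → d ≤ δ → ∫ x in Y..X, q x (d * x) =
      (∫ x in Y..X, (Ff x (d * x)) ^ 2) - 1 / 2 * d * (X ^ 2 - Y ^ 2) * (Real.log (1 / d) + (1 - K)) := by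
    intro d hd hd2
    have hd0 := hδ₁.trans_le hd
    rw [hqdef, intervalIntegral.integral_sub, N_eval hY0 hYX, add_sub_assoc]
    · exact Ff_ii (g := fun x => d * x) (by fun_prop) (M := X) hY0.le hYX le_rfl
        (fun x hx hxb => ⟨mul_nonneg hd0.le (by linarith), by nlinarith⟩)
    · apply ContinuousOn.intervalIntegrable
      rw [uIcc_of_le hYX]
      refine ContinuousOn.congr (f := fun x => d * x * (Real.log (1 / d) - K + 1)) (by fun_prop) ?_
      intro x hx
      have hx0 : x ≠ 0 := (hY0.trans_le hx.1).ne'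
      simp only [mm, show x / (d * x) = 1 / d by rw [div_mul_eq_div_div_swap, div_self hx0]]
  have hGm : Measurable (fun d => ∫ x in Y..X, q x (d * x)) := by
    simp only [intervalIntegral.integral_of_le hYX]
    have : StronglyMeasurable (fun p : ℝ × ℝ => q p.2 (p.1 * p.2)) :=
      (hq.comp (by fun_prop : Measurable (fun p : ℝ × ℝ => (p.2, p.1 * p.2)))).stronglyMeasurable
    exact (this.integral_prod_right' (ν := volume.restrict (Ioc Y X))).measurable
  have hlog : Real.log (δ * X / ((1 - η) * δ * Y)) ≤ Real.log (2 * X) := by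
    apply Real.log_le_log (by positivity)
    rw [div_le_iff₀ (by positivity)]
    have : 1 / 2 ≤ (1 - η) * Y := by nlinarith
    nlinarith [mul_pos hδ hX0]
  have havg : |∫ d in ((1 - η) * δ)..δ, d⁻¹ * ∫ x in Y..X, q x (d * x)| ≤
      2 * D * δ * X ^ (2 - c) * Real.log (2 * X) := by
    refine (avg_swap hq (E := 2 * D * δ * X ^ (2 - c)) (B := (Chebyshev.psi (2 * X) + X) ^ 2 + B0)
      hY0 hYX hδ₁ hle ?_ (by positivity) ?_).trans (by gcongr)
    · intro x h hx1 hx2 hh1 hh2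
      have h0 : 0 < h := lt_of_lt_of_le (by positivity) hh1
      have t1 := Ff_bdd (x := x) (h := h) (M := X) (by linarith) hx2 h0.le (by nlinarith)
      have t2 := hB0 (x, h) ⟨⟨hx1, hx2⟩, ⟨hh1, hh2⟩⟩
      rw [Real.norm_eq_abs] at t2
      refine (abs_sub _ _).trans (add_le_add ?_ t2)
      rw [abs_pow]; gcongr
    · intro a b h ha hab hb h1 h2
      have ha0 : 0 < a := by linarith
      have hb0 : 0 < b := by linarith
      have h0 : 0 < h := lt_of_lt_of_le (by positivity) h1
      have := E_bound (K := K) (D := D) (c := c) (by linarith) hab h0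
        (hH a h ha (hab.trans hb) (le_trans (by gcongr) h1) h2)
        (hH b h (ha.trans hab) hb h1 (h2.trans (by gcongr)))
      refine this.trans ?_
      have p : ∀ y, 0 < y → y ≤ X → h ≤ δ * y → D * h * y ^ (1 - c) ≤ D * δ * X ^ (2 - c) := by
        intro y hy hyX hhy
        calc _ ≤ D * (δ * y) * y ^ (1 - c) := by gcongr
          _ = D * δ * y ^ (2 - c) := by
              rw [show 2 - c = 1 + (1 - c) by ring, Real.rpow_add hy, Real.rpow_one]; ring
          _ ≤ _ := by
              gcongr
      have p1 := p a ha0 (hab.trans hb) h2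
      have p2 := p b hb0 hb (h2.trans (by gcongr))
      linarith
  have hS : ∀ d, (1 - η) * δ ≤ d → d ≤ δ → |(∫ x in Y..X, q x (d * x)) - ∫ x in Y..X, q x (δ * x)| ≤
      17 * C * X ^ (2 + 2 * ε) * δ ^ (1 - ε) * η ^ ((1 - ε) / 2) +
        X ^ 2 * η * δ * (Real.log (1 / δ) + |1 - K| + 1) := by
    intro d hd hd2
    rw [hG0 d hd hd2, hG0 δ hle le_rfl, sub_sub_sub_comm]
    exact (abs_sub _ _).trans (add_le_add (Q_lip hC hε hε1 hvb hY hYX hδ hδ1 hη hη1 hd hd2)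
      (N_lip hY hYX hδ hδ1 hη hη1 hd hd2))
  have := combine hGm hδ hη hη1 havg hS
  rwa [hG0 δ hle le_rfl] at this
end D1

namespace D1
open Set Filter Topology

set_option maxHeartbeats 2000000 in
lemma main2 (hRH : RiemannHypothesis)
    {B₁ B₂ B₃ c : ℝ} (hB₁ : 0 < B₁) (hB₁₂ : B₁ ≤ B₂) (hB₂₃ : B₂ < B₃) (hB₃ : B₃ < 1)
    (hc : 0 < c) (hc2 : c ≤ 2) {K D X₀ : ℝ} (hD : 0 ≤ D)
    (hVt : ∀ X : ℝ, 1 ≤ X → X₀ ≤ X → ∀ h : ℝ, X ^ (1 - B₃) ≤ h → h ≤ X ^ (1 - B₁) →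
      |(∫ t in (1:ℝ)..X, (Ff t h)^2) - h * X * (Real.log (X / h) - K)| ≤ D * h * X ^ (1 - c))
    {ε : ℝ} (hε : 0 < ε) (hε1 : ε ≤ 1) :
    ∃ C : ℝ, 0 < C ∧ ∃ X₁ : ℝ, 1 ≤ X₁ ∧ ∀ X : ℝ, X₁ ≤ X →
      ∀ δ : ℝ, X ^ (-B₂) ≤ δ → δ ≤ X ^ (-B₁) →
        |(∫ x in (1:ℝ)..X, (Ff x (δ * x))^2) - 1 / 2 * δ * X ^ 2 * (Real.log (1 / δ) + (1 - K))|
          ≤ C * (δ ^ (1 - ε) * X ^ (2 - c / 3) +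
              δ ^ (1 - ε) * X ^ 2 * (δ * X ^ B₃) ^ (-(2 / (3 * B₃)))) := by
  have hB30 : 0 < B₃ := by linarith
  set e := B₁ * ε / 4 with he
  have he0 : 0 < e := by positivity
  have heε : e ≤ ε / 4 := by rw [he]; nlinarith
  obtain ⟨C, hC, hvb⟩ := var_bound hRH he0 (by linarith)
  set κ := 1 - K with hκ
  set Cl := 2 / (ε * B₁) with hCl
  set Ck := 1 / ε + |κ| + 1 with hCk
  have hCl0 : 0 < Cl := by positivity
  have hCk0 : 0 < Ck := by positivity
  refine ⟨2 * D * Cl + 17 * C + Ck + 2 ^ (2 / B₃) * (C + Ck), by positivity, ?_⟩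
  have E1 : ∀ᶠ X : ℝ in atTop, X ^ (-(2 * c / 3)) ≤ 1 / 2 :=
    (tendsto_rpow_neg_atTop (show 0 < 2 * c / 3 by positivity)).eventually_le_const (by norm_num)
  have E2 : ∀ᶠ X : ℝ in atTop, 2 ≤ X ^ (B₃ - B₂) :=
    (tendsto_rpow_atTop (by linarith)).eventually_ge_atTop 2
  have E3 : ∀ᶠ X : ℝ in atTop, max X₀ 1 ≤ X ^ (B₁ / B₃) :=
    (tendsto_rpow_atTop (by positivity)).eventually_ge_atTop _
  obtain ⟨X₁, hX₁⟩ := eventually_atTop.mp (E1.and (E2.and E3))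
  refine ⟨max X₁ 1, le_max_right _ _, fun X hX δ hδl hδu => ?_⟩
  obtain ⟨h1, h2, h3⟩ := hX₁ X ((le_max_left _ _).trans hX)
  have hX1 : 1 ≤ X := (le_max_right _ _).trans hX
  have hX0 : 0 < X := by linarith
  have hδ : 0 < δ := lt_of_lt_of_le (by positivity) hδl
  have hδ1 : δ ≤ 1 := hδu.trans (Real.rpow_le_one_of_one_le_of_nonpos hX1 (by linarith))
  set η := X ^ (-(2 * c / 3)) with hη
  have hη0 : 0 < η := by positivity
  -- powers of X against powers of δ
  have pw : ∀ s : ℝ, 0 ≤ s → X ^ (B₁ * s) ≤ δ ^ (-s) := by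
    intro s hs
    have := Real.rpow_le_rpow_of_nonpos hδ hδu (show -s ≤ 0 by linarith)
    rwa [← Real.rpow_mul hX0.le, neg_mul_neg] at this
  have absb : δ ^ (1 - e) * X ^ (3 * e) ≤ δ ^ (1 - ε) := by
    have t : X ^ (3 * e) ≤ δ ^ (-(3 * ε / 4)) := by
      have := pw (3 * ε / 4) (by positivity)
      rwa [show B₁ * (3 * ε / 4) = 3 * e by rw [he]; ring] at this
    calc _ ≤ δ ^ (1 - e) * δ ^ (-(3 * ε / 4)) := by gcongr
      _ = δ ^ (1 - e - 3 * ε / 4) := by rw [← Real.rpow_add hδ]; ring_nf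
      _ ≤ _ := Real.rpow_le_rpow_of_exponent_ge hδ hδ1 (by linarith)
  have split : δ * δ ^ (-ε) = δ ^ (1 - ε) := by
    rw [sub_eq_add_neg, Real.rpow_add hδ, Real.rpow_one]
  have hlogX : δ * Real.log (2 * X) ≤ Cl * δ ^ (1 - ε) := by
    have hs : 0 < ε * B₁ := by positivity
    have t := Real.log_le_rpow_div (show 0 ≤ 2 * X by positivity) hs
    have t2 : (2 * X) ^ (ε * B₁) ≤ 2 * δ ^ (-ε) := by
      rw [Real.mul_rpow (by norm_num) hX0.le]
      have u1 : (2:ℝ) ^ (ε * B₁) ≤ 2 ^ (1:ℝ) :=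
        Real.rpow_le_rpow_of_exponent_le (by norm_num) (by nlinarith)
      rw [Real.rpow_one] at u1
      have u2 := pw ε hε.le
      rw [mul_comm B₁ ε] at u2
      gcongr
    calc _ ≤ δ * ((2 * X) ^ (ε * B₁) / (ε * B₁)) := by gcongr
      _ ≤ δ * ((2 * δ ^ (-ε)) / (ε * B₁)) := by gcongr
      _ = _ := by rw [← split, hCl]; ring
  have hlδ0 : 0 ≤ Real.log (1 / δ) := Real.log_nonneg (by rw [le_div_iff₀ hδ]; linarith)
  have hlogδ : δ * (Real.log (1 / δ) + |κ| + 1) ≤ Ck * δ ^ (1 - ε) := by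
    have t := Real.log_le_rpow_div (show 0 ≤ 1 / δ by positivity) hε
    rw [one_div, Real.inv_rpow hδ.le, ← Real.rpow_neg hδ.le, ← one_div] at t
    have u : 1 ≤ δ ^ (-ε) := Real.one_le_rpow_of_pos_of_le_one_of_nonpos hδ hδ1 (by linarith)
    have v : |κ| ≤ |κ| * δ ^ (-ε) := le_mul_of_one_le_right (abs_nonneg _) u
    calc _ ≤ δ * (δ ^ (-ε) / ε + |κ| * δ ^ (-ε) + δ ^ (-ε)) := by gcongr
      _ = _ := by rw [← split, hCk]; ring
  -- the cut point Y
  set Y := (δ / 2) ^ (-(1 / B₃)) with hY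
  have hδ2 : 0 < δ / 2 := by positivity
  have hY0 : 0 < Y := by positivity
  have hYpow : Y ^ (-B₃) = δ / 2 := by
    rw [hY, ← Real.rpow_mul hδ2.le, show -(1 / B₃) * -B₃ = 1 by field_simp, Real.rpow_one]
  have hnp : -(1 / B₃) ≤ 0 := by have : 0 < 1 / B₃ := by positivity
                                 linarith
  have hYX : Y ≤ X := by
    have t : X ^ (-B₃) ≤ δ / 2 := by
      have : X ^ (-B₂) = X ^ (-B₃) * X ^ (B₃ - B₂) := by
        rw [← Real.rpow_add hX0]; ring_nf
      have p : 0 < X ^ (-B₃) := by positivity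
      nlinarith
    have := Real.rpow_le_rpow_of_nonpos (by positivity) t hnp
    rwa [← Real.rpow_mul hX0.le, show -B₃ * -(1 / B₃) = 1 by field_simp, Real.rpow_one] at this
  have hYbig : max X₀ 1 ≤ Y := by
    refine h3.trans ?_
    have := Real.rpow_le_rpow_of_nonpos hδ2 (show δ / 2 ≤ X ^ (-B₁) by linarith) hnp
    rwa [← Real.rpow_mul hX0.le, show -B₁ * -(1 / B₃) = B₁ / B₃ by field_simp] at this
  have hY1 : 1 ≤ Y := (le_max_right _ _).trans hYbig
  have hco := core hC he0 (by linarith) hvb (K := K) (D := D) (c := c) hD hc2 hY1 hYX hδ hδ1 hη0 h1 (by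
    intro x h hx hxX hh1 hh2
    have hx0 : 0 < x := by linarith
    refine hVt x (by linarith) ((le_max_left _ _).trans (hYbig.trans hx)) h ?_ ?_
    · refine le_trans ?_ hh1
      rw [show 1 - B₃ = -B₃ + 1 by ring, Real.rpow_add hx0, Real.rpow_one]
      gcongr
      have := Real.rpow_le_rpow_of_nonpos hY0 hx (show -B₃ ≤ 0 by linarith)
      rw [hYpow] at this
      refine this.trans ?_
      have : 1 / 2 * δ ≤ (1 - η) * δ := mul_le_mul_of_nonneg_right (by linarith) hδ.le
      linarith
    · refine hh2.trans ?_
      rw [show 1 - B₁ = -B₁ + 1 by ring, Real.rpow_add hx0, Real.rpow_one]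
      gcongr
      exact hδu.trans (Real.rpow_le_rpow_of_nonpos hx0 hxX (by linarith)))
  rw [← hκ] at hco
  set W := δ ^ (1 - ε) * X ^ (2 - c / 3) with hW
  set Z := δ ^ (1 - ε) * X ^ 2 * (δ * X ^ B₃) ^ (-(2 / (3 * B₃))) with hZ
  have T1 : 2 * D * δ * X ^ (2 - c) * Real.log (2 * X) / η ≤ 2 * D * Cl * W := by
    have : X ^ (2 - c) / η = X ^ (2 - c / 3) := by
      rw [hη, ← Real.rpow_sub hX0]; ring_nf
    calc _ = 2 * D * (δ * Real.log (2 * X)) * (X ^ (2 - c) / η) := by ring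
      _ ≤ 2 * D * (Cl * δ ^ (1 - ε)) * (X ^ (2 - c) / η) := by gcongr
      _ = _ := by rw [this, hW]; ring
  have T2 : 17 * C * X ^ (2 + 2 * e) * δ ^ (1 - e) * η ^ ((1 - e) / 2) ≤ 17 * C * W := by
    have : X ^ (2 + 2 * e) * η ^ ((1 - e) / 2) ≤ X ^ (2 - c / 3) * X ^ (3 * e) := by
      rw [hη, ← Real.rpow_mul hX0.le, ← Real.rpow_add hX0, ← Real.rpow_add hX0]
      apply Real.rpow_le_rpow_of_exponent_le hX1
      nlinarith
    calc _ = 17 * C * δ ^ (1 - e) * (X ^ (2 + 2 * e) * η ^ ((1 - e) / 2)) := by ring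
      _ ≤ 17 * C * δ ^ (1 - e) * (X ^ (2 - c / 3) * X ^ (3 * e)) := by gcongr
      _ = 17 * C * X ^ (2 - c / 3) * (δ ^ (1 - e) * X ^ (3 * e)) := by ring
      _ ≤ 17 * C * X ^ (2 - c / 3) * (δ ^ (1 - ε)) := by gcongr
      _ = _ := by rw [hW]; ring
  have T3 : X ^ 2 * η * δ * (Real.log (1 / δ) + |κ| + 1) ≤ Ck * W := by
    have : X ^ 2 * η ≤ X ^ (2 - c / 3) := by
      rw [hη, ← Real.rpow_natCast X 2, ← Real.rpow_add hX0]
      apply Real.rpow_le_rpow_of_exponent_le hX1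
      push_cast; linarith
    calc _ = X ^ 2 * η * (δ * (Real.log (1 / δ) + |κ| + 1)) := by ring
      _ ≤ X ^ (2 - c / 3) * (Ck * δ ^ (1 - ε)) := by gcongr
      _ = _ := by rw [hW]; ring
  have hYsq : Y ^ 2 * δ ^ (1 - ε) ≤ 2 ^ (2 / B₃) * Z := by
    set w := δ * X ^ B₃ with hw
    have hw1 : 1 ≤ w := by
      calc (1:ℝ) ≤ X ^ (-B₂) * X ^ B₃ := by
            rw [← Real.rpow_add hX0]; exact Real.one_le_rpow hX1 (by linarith)
        _ ≤ w := by rw [hw]; gcongr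
    have q1 : Y ^ 2 = 2 ^ (2 / B₃) * (X ^ 2 * w ^ (-(2 / B₃))) := by
      rw [hw, Real.mul_rpow hδ.le (by positivity), ← Real.rpow_mul hX0.le,
        show B₃ * -(2 / B₃) = -2 by field_simp, hY, ← Real.rpow_natCast, ← Real.rpow_mul hδ2.le,
        show -(1 / B₃) * ((2:ℕ):ℝ) = -(2 / B₃) by push_cast; ring,
        Real.div_rpow hδ.le (by norm_num), Real.rpow_neg (by norm_num : (0:ℝ) ≤ 2),
        Real.rpow_neg hX0.le]
      have : X ^ (2:ℝ) = X ^ 2 := by norm_cast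
      rw [this]
      field_simp
    have q2 : w ^ (-(2 / B₃)) ≤ w ^ (-(2 / (3 * B₃))) := by
      apply Real.rpow_le_rpow_of_exponent_le hw1
      have : 2 / (3 * B₃) ≤ 2 / B₃ := by gcongr; linarith
      linarith
    calc _ ≤ 2 ^ (2 / B₃) * (X ^ 2 * w ^ (-(2 / (3 * B₃)))) * δ ^ (1 - ε) := by rw [q1]; gcongr
      _ = _ := by rw [hZ]; ring
  have T4 : ∫ x in (1:ℝ)..Y, (Ff x (δ * x)) ^ 2 ≤ C * (Y ^ 2 * δ ^ (1 - ε)) := by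
    refine (hvb Y δ hY1 hδ hδ1).trans ?_
    have q : Y ^ (2 + 2 * e) ≤ Y ^ 2 * X ^ (3 * e) := by
      rw [Real.rpow_add hY0]
      have : Y ^ (2:ℝ) = Y ^ 2 := by norm_cast
      rw [this]
      gcongr
      exact (Real.rpow_le_rpow hY0.le hYX (by positivity)).trans
        (Real.rpow_le_rpow_of_exponent_le hX1 (by linarith))
    calc _ ≤ C * (Y ^ 2 * X ^ (3 * e)) * δ ^ (1 - e) := by gcongr
      _ = C * (Y ^ 2 * (δ ^ (1 - e) * X ^ (3 * e))) := by ring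
      _ ≤ _ := by gcongr
  have T4' : 0 ≤ ∫ x in (1:ℝ)..Y, (Ff x (δ * x)) ^ 2 :=
    intervalIntegral.integral_nonneg hY1 fun x _ => sq_nonneg _
  have T5 : |1 / 2 * δ * Y ^ 2 * (Real.log (1 / δ) + κ)| ≤ Ck * (Y ^ 2 * δ ^ (1 - ε)) := by
    rw [abs_mul, abs_of_nonneg (by positivity : 0 ≤ 1 / 2 * δ * Y ^ 2)]
    have : |Real.log (1 / δ) + κ| ≤ Real.log (1 / δ) + |κ| + 1 := by
      refine (abs_add_le _ _).trans ?_
      rw [abs_of_nonneg hlδ0]; linarith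
    calc _ ≤ 1 / 2 * δ * Y ^ 2 * (Real.log (1 / δ) + |κ| + 1) := by gcongr
      _ = 1 / 2 * Y ^ 2 * (δ * (Real.log (1 / δ) + |κ| + 1)) := by ring
      _ ≤ 1 / 2 * Y ^ 2 * (Ck * δ ^ (1 - ε)) := by gcongr
      _ ≤ _ := by
        have : 0 ≤ Ck * (Y ^ 2 * δ ^ (1 - ε)) := by positivity
        linarith
  have id : ∀ a b : ℝ, 0 ≤ a → a ≤ b →
      IntervalIntegrable (fun x => (Ff x (δ * x)) ^ 2) volume a b := fun a b ha hab =>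
    Ff_ii (g := fun x => δ * x) (by fun_prop) (M := b) ha hab le_rfl
      (fun x hx hxb => ⟨mul_nonneg hδ.le (ha.trans hx), by nlinarith⟩)
  rw [← intervalIntegral.integral_add_adjacent_intervals (id 1 Y zero_le_one hY1) (id Y X hY0.le hYX)]
  have hZ0 : 0 ≤ Z := by positivity
  have hW0 : 0 ≤ W := by positivity
  have tot : (C + Ck) * (Y ^ 2 * δ ^ (1 - ε)) ≤ (C + Ck) * (2 ^ (2 / B₃) * Z) := by gcongr
  have m1 : 0 ≤ (2 * D * Cl + 17 * C + Ck) * Z := by positivity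
  have m2 : 0 ≤ 2 ^ (2 / B₃) * (C + Ck) * W := by positivity
  rw [abs_le] at hco T5 ⊢
  obtain ⟨u1, u2⟩ := hco
  obtain ⟨v1, v2⟩ := T5
  clear_value W Z Y η Cl Ck
  constructor <;> linarith

lemma main3 (hRH : RiemannHypothesis)
    {B₁ B₂ B₃ c : ℝ} (hB₁ : 0 < B₁) (hB₁₂ : B₁ ≤ B₂) (hB₂₃ : B₂ < B₃) (hB₃ : B₃ < 1)
    (hc : 0 < c) {K D X₀ : ℝ}
    (hVt : ∀ X : ℝ, X₀ ≤ X → ∀ h : ℝ, X ^ (1 - B₃) ≤ h → h ≤ X ^ (1 - B₁) →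
      |(∫ t in (1:ℝ)..X, (Ff t h)^2) - h * X * (Real.log (X / h) - K)| ≤ D * h * X ^ (1 - c))
    {ε : ℝ} (hε : 0 < ε) :
    ∃ C : ℝ, 0 < C ∧ ∃ X₁ : ℝ, ∀ X : ℝ, X₁ ≤ X →
      ∀ δ : ℝ, X ^ (-B₂) ≤ δ → δ ≤ X ^ (-B₁) →
        |(∫ x in (1:ℝ)..X, (Ff x (δ * x))^2) - 1 / 2 * δ * X ^ 2 * (Real.log (1 / δ) + (1 - K))|
          ≤ C * (δ ^ (1 - ε) * X ^ (2 - c / 3) +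
              δ ^ (1 - ε) * X ^ 2 * (δ * X ^ B₃) ^ (-(2 / (3 * B₃)))) := by
  have hB30 : 0 < B₃ := by linarith
  obtain ⟨C, hC, X₁, hX₁, H⟩ := main2 hRH hB₁ hB₁₂ hB₂₃ hB₃ (c := min c 2) (lt_min hc two_pos)
    (min_le_right _ _) (K := K) (D := |D|) (X₀ := X₀) (abs_nonneg D) (by
      intro X h1 h2 h h3 h4
      have hX0 : 0 < X := by linarith
      have h0 : 0 < h := lt_of_lt_of_le (by positivity) h3
      refine (hVt X h2 h h3 h4).trans ?_
      have : X ^ (1 - c) ≤ X ^ (1 - min c 2) :=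
        Real.rpow_le_rpow_of_exponent_le h1 (by linarith [min_le_left c 2])
      have := le_abs_self D
      gcongr) (ε := min ε 1) (lt_min hε one_pos) (min_le_right _ _)
  refine ⟨2 * C, by positivity, X₁, fun X hX δ hδl hδu => ?_⟩
  have hX1 : 1 ≤ X := hX₁.trans hX
  have hX0 : 0 < X := by linarith
  have hδ : 0 < δ := lt_of_lt_of_le (by positivity) hδl
  have hδ1 : δ ≤ 1 := hδu.trans (Real.rpow_le_one_of_one_le_of_nonpos hX1 (by linarith))
  refine (H X hX δ hδl hδu).trans ?_
  have g1 : δ ^ (1 - min ε 1) ≤ δ ^ (1 - ε) :=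
    Real.rpow_le_rpow_of_exponent_ge hδ hδ1 (by linarith [min_le_left ε 1])
  set w := δ * X ^ B₃ with hw
  have hw0 : 0 < w := by positivity
  have g2 : X ^ (2 - min c 2 / 3) ≤ X ^ (2 - c / 3) + X ^ 2 * w ^ (-(2 / (3 * B₃))) := by
    rcases le_total c 2 with h | h
    · rw [min_eq_left h]
      have : 0 ≤ X ^ 2 * w ^ (-(2 / (3 * B₃))) := by positivity
      linarith
    · rw [min_eq_right h]
      have hwX : w ≤ X ^ B₃ := by rw [hw]; exact mul_le_of_le_one_left (by positivity) hδ1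
      have t := Real.rpow_le_rpow_of_nonpos hw0 hwX
        (show -(2 / (3 * B₃)) ≤ 0 by have : 0 < 2 / (3 * B₃) := by positivity
                                     linarith)
      rw [← Real.rpow_mul hX0.le, show B₃ * -(2 / (3 * B₃)) = -(2 / 3) by field_simp] at t
      have : X ^ ((2:ℝ) - 2 / 3) = X ^ 2 * X ^ (-(2 / 3) : ℝ) := by
        rw [sub_eq_add_neg, Real.rpow_add hX0]; norm_cast
      rw [this]
      have : 0 ≤ X ^ (2 - c / 3) := by positivity
      have : X ^ 2 * X ^ (-(2 / 3) : ℝ) ≤ X ^ 2 * w ^ (-(2 / (3 * B₃))) := by gcongr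
      linarith
  have p0 : 0 ≤ δ ^ (1 - ε) * X ^ (2 - c / 3) := by positivity
  calc _ ≤ C * (δ ^ (1 - ε) * (X ^ (2 - c / 3) + X ^ 2 * w ^ (-(2 / (3 * B₃)))) +
        δ ^ (1 - ε) * X ^ 2 * w ^ (-(2 / (3 * B₃)))) := by gcongr
    _ ≤ _ := by nlinarith
end D1

namespace D1

lemma psi_eq (x : ℝ) : chebyshevPsi x = Chebyshev.psi x := by
  rw [Chebyshev.psi_eq_sum_Icc, chebyshevPsi, Finset.range_eq_Ico]
  rfl

lemma varD_eq (X δ : ℝ) : zetaVarDelta X δ = ∫ x in (1:ℝ)..X, (Ff x (δ * x)) ^ 2 := by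
  simp only [zetaVarDelta, psi_eq, Ff]

lemma varH_eq (X h : ℝ) : zetaVarH X h = ∫ x in (1:ℝ)..X, (Ff x h) ^ 2 := by
  simp only [zetaVarH, psi_eq, Ff]

end D1

/-- **Theorem D1 for the Riemann zeta function.** An asymptotic for `Ṽ(X,h)` with power
saving implies an asymptotic for `V(X,δ)`. -/
theorem theoremD1_zeta (hRH : RiemannHypothesis)
    (B₁ B₂ B₃ c : ℝ) (hB₁ : 0 < B₁) (hB₁₂ : B₁ ≤ B₂) (hB₂₃ : B₂ < B₃) (hB₃ : B₃ < 1)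
    (hc : 0 < c) (D X₀ : ℝ)
    (hVt : ∀ X : ℝ, X₀ ≤ X → ∀ h : ℝ, X ^ (1 - B₃) ≤ h → h ≤ X ^ (1 - B₁) →
      |zetaVarH X h - h * X *
          (Real.log (X / h) - Real.eulerMascheroniConstant - Real.log (2 * π))|
        ≤ D * h * X ^ (1 - c)) :
    ∀ ε : ℝ, 0 < ε → ∃ C : ℝ, 0 < C ∧ ∃ X₁ : ℝ, ∀ X : ℝ, X₁ ≤ X →
      ∀ δ : ℝ, X ^ (-B₂) ≤ δ → δ ≤ X ^ (-B₁) →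
        |zetaVarDelta X δ - 1 / 2 * δ * X ^ 2 *
            (Real.log (1 / δ) + 1 - Real.eulerMascheroniConstant - Real.log (2 * π))|
          ≤ C * (δ ^ (1 - ε) * X ^ (2 - c / 3) +
              δ ^ (1 - ε) * X ^ 2 * (δ * X ^ B₃) ^ (-(2 / (3 * B₃)))) := by
  intro ε hε
  obtain ⟨C, hC, X₁, H⟩ := D1.main3 hRH hB₁ hB₁₂ hB₂₃ hB₃ hc (D := D) (X₀ := X₀)
    (K := Real.eulerMascheroniConstant + Real.log (2 * π)) (by
      intro X hX h h1 h2
      have := hVt X hX h h1 h2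
      rw [D1.varH_eq, sub_sub] at this
      exact this) hε
  refine ⟨C, hC, X₁, fun X hX δ h1 h2 => ?_⟩
  have := H X hX δ h1 h2
  rw [D1.varD_eq, show Real.log (1 / δ) + 1 - Real.eulerMascheroniConstant - Real.log (2 * π) =
    Real.log (1 / δ) + (1 - (Real.eulerMascheroniConstant + Real.log (2 * π))) by ring]
  exact this
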